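/- arXiv:1704.07095 — 8 statements merged into one kernel-verified Lean document; each statement's English description precedes it below -/
import Mathlib

section
/- Let X and Y be real Banach spaces, Y nontrivial, such that Y has property β with parameter ρ ∈ [0,1). Then for every ε ∈ (0,1) both the Bishop–Phelps–Bollobás modulus and the spherical Bishop–Phelps–Bollobás modulus of the pair (X,Y) satisfy Φ^S(X,Y,ε) ≤ Φ(X,Y,ε) ≤ min{ √(2ε)·√((1+ρ)/(1−ρ)), 2 }. -/
/-!
The bound `Φ ≤ 2` only needs one norm-attaining operator, which Hahn–Banach provides; so assume
`δ = √(2ε) √((1+ρ)/(1-ρ)) < 2`. Property β gives `α` with `y*_α (T x) > 1 - ε` (up to replacing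
`x` by `-x`). A quantitative Bishop–Phelps theorem (`exists_support_functional`, obtained from
Ekeland's principle on the unit ball and a Hahn–Banach separation) applied to `x* = y*_α ∘ T`
produces `z ∈ S_X` and `z* ∈ S_{X*}` with `z* z = 1`, `‖x - z‖ ≤ δ` and `‖x* - z*‖ ≤ 2ε/δ`
(`exists_attaining_functional`).

The new operator is `F = a T + (z* - a x*) ⊗ y_α` with `1 - a = ρ D / (1 - ρ)`, `D = 2ε/δ`. Then
`y*_α ∘ F = z*`, while for `γ ≠ α` the functional `y*_γ ∘ F` has norm at most
`a + ρ (D + (1 - a)) = 1`; hence `‖F‖ = 1 = ‖F z‖`. Likewise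
`‖T - F‖ ≤ max (D, 2ρD/(1-ρ)) ≤ D (1+ρ)/(1-ρ) = δ`.
-/

noncomputable section

/-- A real Banach space `Y` has the property β of Lindenstrauss with parameter `ρ`:
there are families `{y_α} ⊆ S_Y` and `{y*_α} ⊆ S_{Y*}` with `y*_α(y_α) = 1`,
`|y*_α(y_γ)| ≤ ρ` for `α ≠ γ`, and `‖y‖ = sup_α |y*_α(y)|` for all `y`. -/
def PropertyBeta (Y : Type u) [NormedAddCommGroup Y] [NormedSpace ℝ Y] (ρ : ℝ) : Prop :=
  ∃ (Λ : Type u) (yv : Λ → Y) (yf : Λ → (Y →L[ℝ] ℝ)),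
    (∀ α, ‖yv α‖ = 1) ∧ (∀ α, ‖yf α‖ = 1) ∧ (∀ α, yf α (yv α) = 1) ∧
    (∀ α γ, α ≠ γ → |yf α (yv γ)| ≤ ρ) ∧
    (∀ v : Y, IsLUB (Set.range fun α => |yf α v|) ‖v‖)

/-- The Bishop–Phelps–Bollobás modulus `Φ(X,Y,ε)` of a pair of spaces. -/
def Phi (X Y : Type*) [NormedAddCommGroup X] [NormedSpace ℝ X]
    [NormedAddCommGroup Y] [NormedSpace ℝ Y] (ε : ℝ) : ℝ :=
  sInf {δ : ℝ | 0 < δ ∧ ∀ (x : X) (T : X →L[ℝ] Y), ‖x‖ ≤ 1 → ‖T‖ ≤ 1 → 1 - ε < ‖T x‖ →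
    ∃ (z : X) (F : X →L[ℝ] Y), ‖z‖ = 1 ∧ ‖F‖ = 1 ∧ ‖F z‖ = 1 ∧ ‖x - z‖ < δ ∧ ‖T - F‖ < δ}

/-- The spherical Bishop–Phelps–Bollobás modulus `Φ^S(X,Y,ε)` of a pair of spaces. -/
def PhiS (X Y : Type*) [NormedAddCommGroup X] [NormedSpace ℝ X]
    [NormedAddCommGroup Y] [NormedSpace ℝ Y] (ε : ℝ) : ℝ :=
  sInf {δ : ℝ | 0 < δ ∧ ∀ (x : X) (T : X →L[ℝ] Y), ‖x‖ = 1 → ‖T‖ = 1 → 1 - ε < ‖T x‖ →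
    ∃ (z : X) (F : X →L[ℝ] Y), ‖z‖ = 1 ∧ ‖F‖ = 1 ∧ ‖F z‖ = 1 ∧ ‖x - z‖ < δ ∧ ‖T - F‖ < δ}

/-! ### The Ekeland principle and the Bishop–Phelps theorem -/

/-- Ekeland's variational principle for a continuous linear functional on the unit ball. -/
lemma ekeland_unitBall {X : Type*} [NormedAddCommGroup X] [NormedSpace ℝ X] [CompleteSpace X]
    (f : X →L[ℝ] ℝ) {K : ℝ} (hK : 0 < K) (x : X) (hx : ‖x‖ ≤ 1) :
    ∃ z : X, ‖z‖ ≤ 1 ∧ K * ‖z - x‖ ≤ f z - f x ∧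
      ∀ w : X, ‖w‖ ≤ 1 → K * ‖w - z‖ ≤ f w - f z → w = z := by
  -- Each step captures at least half of the possible gain of `f` on the cone above `v`.
  have step : ∀ v : {v : X // ‖v‖ ≤ 1}, ∃ w : {v : X // ‖v‖ ≤ 1},
      K * ‖w.1 - v.1‖ ≤ f w.1 - f v.1 ∧
      ∀ u : X, ‖u‖ ≤ 1 → K * ‖u - v.1‖ ≤ f u - f v.1 → f u - f w.1 ≤ f w.1 - f v.1 := by
    intro v
    let S : Set ℝ := f '' {u : X | ‖u‖ ≤ 1 ∧ K * ‖u - v.1‖ ≤ f u - f v.1}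
    have hbdd : BddAbove S := by
      refine ⟨‖f‖, ?_⟩
      rintro _ ⟨u, hu, rfl⟩
      have h1 := (le_abs_self (f u)).trans (f.le_opNorm u)
      have h2 := mul_le_mul_of_nonneg_left hu.1 (norm_nonneg f)
      linarith
    have hv : f v.1 ∈ S := ⟨v.1, ⟨v.2, by simp⟩, rfl⟩
    have hle : ∀ u : X, ‖u‖ ≤ 1 → K * ‖u - v.1‖ ≤ f u - f v.1 → f u ≤ sSup S :=
      fun u h1 h2 => le_csSup hbdd ⟨u, ⟨h1, h2⟩, rfl⟩
    rcases (le_csSup hbdd hv).eq_or_lt with h | h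
    · exact ⟨v, by simp, fun u h1 h2 => by have := hle u h1 h2; linarith⟩
    · obtain ⟨_, ⟨w, hw, rfl⟩, hlt⟩ := exists_lt_of_lt_csSup ⟨_, hv⟩
        (show (f v.1 + sSup S) / 2 < sSup S by linarith)
      exact ⟨⟨w, hw.1⟩, hw.2, fun u h1 h2 => by have := hle u h1 h2; dsimp only; linarith⟩
  choose g hg1 hg2 using step
  let v : ℕ → {v : X // ‖v‖ ≤ 1} := fun n => g^[n] ⟨x, hx⟩
  have hsucc : ∀ n, v (n + 1) = g (v n) := fun n => Function.iterate_succ_apply' g n _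
  have hchain : ∀ n m, n ≤ m → K * ‖(v m).1 - (v n).1‖ ≤ f (v m).1 - f (v n).1 := by
    intro n m hnm
    induction m, hnm using Nat.le_induction with
    | base => simp
    | succ m _ ih =>
      have h1 := hg1 (v m)
      rw [← hsucc] at h1
      have h2 := mul_le_mul_of_nonneg_left
        (norm_sub_le_norm_sub_add_norm_sub (v (m + 1)).1 (v m).1 (v n).1) hK.le
      linarith
  have hmono : Monotone fun n => f (v n).1 := by
    intro n m hnm
    have h1 := hchain n m hnm
    have h2 := mul_nonneg hK.le (norm_nonneg ((v m).1 - (v n).1))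
    dsimp only
    linarith
  have hbd : BddAbove (Set.range fun n => f (v n).1) := by
    refine ⟨‖f‖, ?_⟩
    rintro _ ⟨n, rfl⟩
    have h1 := (le_abs_self (f (v n).1)).trans (f.le_opNorm (v n).1)
    have h2 := mul_le_mul_of_nonneg_left (v n).2 (norm_nonneg f)
    dsimp only
    linarith
  have hconv := tendsto_atTop_ciSup hmono hbd
  have hcau : CauchySeq fun n => (v n).1 := by
    rw [Metric.cauchySeq_iff']
    intro e he
    obtain ⟨N, hN⟩ := Metric.cauchySeq_iff'.1 hconv.cauchySeq (K * e) (by positivity)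
    refine ⟨N, fun n hn => ?_⟩
    have h1 := hN n hn
    rw [Real.dist_eq] at h1
    have h2 := hchain N n hn
    rw [dist_eq_norm]
    exact lt_of_mul_lt_mul_left ((h2.trans (le_abs_self _)).trans_lt h1) hK.le
  obtain ⟨z, hz⟩ := cauchySeq_tendsto_of_complete hcau
  have hfz : Filter.Tendsto (fun n => f (v n).1) Filter.atTop (nhds (f z)) :=
    (f.continuous.tendsto z).comp hz
  have hzn : ∀ n, K * ‖z - (v n).1‖ ≤ f z - f (v n).1 := by
    intro n
    refine le_of_tendsto_of_tendsto ((hz.sub_const (v n).1).norm.const_mul K)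
      (hfz.sub_const (f (v n).1)) ?_
    filter_upwards [Filter.eventually_ge_atTop n] with m hm using hchain n m hm
  refine ⟨z, le_of_tendsto hz.norm (Filter.Eventually.of_forall fun n => (v n).2), hzn 0, ?_⟩
  intro w hw hwz
  have hle : f w - f z ≤ f z - f z := by
    refine le_of_tendsto_of_tendsto' (tendsto_const_nhds.sub
      (hfz.comp (Filter.tendsto_add_atTop_nat 1)))
      ((hfz.comp (Filter.tendsto_add_atTop_nat 1)).sub hfz) (fun n => ?_)
    have h1 := hg2 (v n) w hw (by
      have h2 := mul_le_mul_of_nonneg_left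
        (norm_sub_le_norm_sub_add_norm_sub w z (v n).1) hK.le
      have h3 := hzn n
      linarith)
    rw [← hsucc] at h1
    exact h1
  have h0 : K * ‖w - z‖ ≤ 0 := by linarith
  have h1 : ‖w - z‖ ≤ 0 := by
    by_contra! h
    have := mul_pos hK h
    linarith
  exact sub_eq_zero.1 (norm_le_zero_iff.1 h1)

/-- A quantitative Bishop–Phelps theorem: after perturbing a functional by at most `K < ‖f‖`,
it attains its norm at a point whose distance from `x` is controlled by `(‖f‖ - f x) / K`. -/
lemma exists_support_functional {X : Type*} [NormedAddCommGroup X] [NormedSpace ℝ X]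
    [CompleteSpace X] (f : X →L[ℝ] ℝ) {K : ℝ} (hK : 0 < K) (hKf : K < ‖f‖)
    (x : X) (hx : ‖x‖ ≤ 1) :
    ∃ (z : X) (ζ : X →L[ℝ] ℝ), ‖z‖ = 1 ∧ ζ z = ‖ζ‖ ∧ 0 < ‖ζ‖ ∧
      K * ‖x - z‖ ≤ ‖f‖ - f x ∧ ‖f - ζ‖ ≤ K := by
  obtain ⟨z, hz, hzx, hmax⟩ := ekeland_unitBall f hK x hx
  -- Separate the open cone `K ‖v‖ < t` from the hypograph of `f (· - z)` on the ball.
  let A : Set (X × ℝ) := {p | K * ‖p.1‖ < p.2}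
  let C : Set (X × ℝ) := {p | ‖p.1 + z‖ ≤ 1 ∧ p.2 ≤ f p.1}
  have hAo : IsOpen A := isOpen_lt (by fun_prop) (by fun_prop)
  have hAc : Convex ℝ A := by
    intro p hp q hq a b ha hb hab
    simp only [A, Set.mem_ofPred_eq, Prod.fst_add, Prod.snd_add, Prod.smul_fst, Prod.smul_snd,
      smul_eq_mul] at hp hq ⊢
    have h1 : ‖a • p.1 + b • q.1‖ ≤ a * ‖p.1‖ + b * ‖q.1‖ := by
      refine (norm_add_le _ _).trans ?_
      rw [norm_smul_of_nonneg ha, norm_smul_of_nonneg hb]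
    have h2 := mul_le_mul_of_nonneg_left h1 hK.le
    rcases ha.eq_or_lt with h | h
    · have : b = 1 := by linarith
      subst h; subst this
      simp only [zero_smul, zero_add, one_smul, zero_mul, one_mul]
      exact hq
    · have h3 := mul_lt_mul_of_pos_left hp h
      have h4 := mul_le_mul_of_nonneg_left hq.le hb
      linarith
  have hCc : Convex ℝ C := by
    intro p hp q hq a b ha hb hab
    simp only [C, Set.mem_ofPred_eq, Prod.fst_add, Prod.snd_add, Prod.smul_fst, Prod.smul_snd,
      smul_eq_mul, map_add, map_smul] at hp hq ⊢
    constructor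
    · have : a • p.1 + b • q.1 + z = a • (p.1 + z) + b • (q.1 + z) := by
        have h : z = a • z + b • z := by rw [← add_smul, hab, one_smul]
        nth_rewrite 1 [h]
        simp only [smul_add]; abel
      rw [this]
      refine (norm_add_le _ _).trans ?_
      rw [norm_smul_of_nonneg ha, norm_smul_of_nonneg hb]
      nlinarith [hp.1, hq.1]
    · nlinarith [hp.2, hq.2]
  have hdisj : Disjoint A C := by
    rw [Set.disjoint_left]
    rintro p hp ⟨hp1, hp2⟩
    have hp' : K * ‖p.1‖ < p.2 := hp
    have h := hmax (p.1 + z) hp1 (by rw [add_sub_cancel_right, map_add]; linarith)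
    have h0 : p.1 = 0 := by simpa using h
    rw [h0] at hp' hp2
    simp at hp' hp2
    linarith
  obtain ⟨φ, r, hφA, hφC⟩ := geometric_hahn_banach_open hAc hAo hCc hdisj
  set c : ℝ := φ (0, 1) with hc
  let g : X →L[ℝ] ℝ := φ.comp (ContinuousLinearMap.inl ℝ X ℝ)
  have hφ : ∀ v t, φ (v, t) = g v + t * c := by
    intro v t
    have : ((v, t) : X × ℝ) = (v, 0) + t • (0, 1) := by simp
    rw [this, map_add, map_smul]
    rfl
  have hr0 : r ≤ 0 := by
    have := hφC (0, 0) ⟨by simpa using hz, by simp⟩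
    rw [hφ] at this; simpa using this
  have hc0 : c < 0 := by
    have := hφA (0, 1) (by simp [A])
    rw [← hc] at this; linarith
  have hr : 0 ≤ r := by
    by_contra! h
    -- The point `(0, t)` with `t c = r` lies in the cone.
    have := hφA (0, r / c) (by simpa [A] using div_pos_of_neg_of_neg h hc0)
    rw [hφ, div_mul_cancel₀ _ hc0.ne] at this
    simp at this
  have hgA : ∀ v, g v ≤ -c * (K * ‖v‖) := by
    intro v
    refine le_of_forall_pos_lt_add fun e he => ?_
    have := hφA (v, K * ‖v‖ + e / (-c)) (by
      have : 0 < e / (-c) := div_pos he (by linarith)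
      simp only [A, Set.mem_ofPred_eq]; linarith)
    rw [hφ] at this
    have h2 : e / (-c) * c = -e := by rw [div_neg, neg_mul, div_mul_cancel₀ _ hc0.ne]
    linarith
  have hgC : ∀ w, ‖w‖ ≤ 1 → -c * f (w - z) ≤ g (w - z) := by
    intro w hw
    have := hφC (w - z, f (w - z)) ⟨by simpa using hw, le_rfl⟩
    rw [hφ] at this
    linarith
  let u : X →L[ℝ] ℝ := (-c)⁻¹ • g
  have hcpos : 0 < -c := by linarith
  have huA : ∀ v, u v ≤ K * ‖v‖ := fun v => by
    change (-c)⁻¹ * g v ≤ _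
    rw [inv_mul_le_iff₀ hcpos]
    exact hgA v
  have huK : ‖u‖ ≤ K := by
    refine u.opNorm_le_bound hK.le fun v => ?_
    rw [Real.norm_eq_abs, abs_le]
    have := huA (-v)
    rw [map_neg, norm_neg] at this
    exact ⟨by linarith, huA v⟩
  have huC : ∀ w, ‖w‖ ≤ 1 → f (w - z) ≤ u (w - z) := fun w hw => by
    change _ ≤ (-c)⁻¹ * g (w - z)
    rw [le_inv_mul_iff₀ hcpos]
    exact hgC w hw
  let ζ : X →L[ℝ] ℝ := f - u
  have hζle : ∀ w, ‖w‖ ≤ 1 → ζ w ≤ ζ z := fun w hw => by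
    have := huC w hw
    simp only [map_sub] at this
    simp only [ζ, sub_apply]
    linarith
  have hζz0 : 0 ≤ ζ z := by simpa using hζle 0 (by simp)
  have hζpos : 0 < ‖ζ‖ := by
    have : ‖f‖ ≤ ‖ζ‖ + ‖u‖ := by
      have := norm_add_le ζ u
      rwa [show ζ + u = f from sub_add_cancel f u] at this
    linarith
  have hle : ‖ζ‖ ≤ ζ z := by
    refine ζ.opNorm_le_of_unit_norm hζz0 fun w hw => ?_
    rw [Real.norm_eq_abs, abs_le]
    have h1 := hζle (-w) (by rw [norm_neg, hw])
    rw [map_neg] at h1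
    exact ⟨by linarith, hζle w hw.le⟩
  have hge : ζ z ≤ ‖ζ‖ * ‖z‖ := (le_abs_self _).trans (ζ.le_opNorm z)
  have hz1 : ‖z‖ = 1 := by
    refine le_antisymm hz ?_
    by_contra! h
    have := mul_lt_mul_of_pos_left h hζpos
    linarith
  refine ⟨z, ζ, hz1, ?_, hζpos, ?_, ?_⟩
  · rw [hz1, mul_one] at hge
    exact le_antisymm hge hle
  · have h1 : f z ≤ ‖f‖ * ‖z‖ := (le_abs_self _).trans (f.le_opNorm z)
    rw [norm_sub_rev]
    rw [hz1] at h1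
    linarith
  · simpa [ζ] using huK

/-! ### The Bishop–Phelps–Bollobás theorem for functionals -/

/-- The Bishop–Phelps–Bollobás theorem for functionals, with an asymmetric choice of constants:
the point moves by at most `δ` and the functional by at most `2ε/δ`. -/
lemma exists_attaining_functional {X : Type*} [NormedAddCommGroup X] [NormedSpace ℝ X]
    [CompleteSpace X] (f : X →L[ℝ] ℝ) (hf : ‖f‖ ≤ 1) {ε δ : ℝ} (hε1 : ε < 1)
    (hδ : 0 < δ) (hδ2 : δ < 2) (hεδ : 2 * ε ≤ δ ^ 2) (x : X) (hx : ‖x‖ ≤ 1)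
    (hfx : 1 - ε < f x) :
    ∃ (z : X) (g : X →L[ℝ] ℝ), ‖z‖ = 1 ∧ ‖g‖ = 1 ∧ g z = 1 ∧ ‖x - z‖ ≤ δ ∧
      ‖f - g‖ ≤ 2 * ε / δ := by
  have hfx2 : f x ≤ ‖f‖ := by
    have h1 := (le_abs_self _).trans (f.le_opNorm x)
    have h2 := mul_le_mul_of_nonneg_left hx (norm_nonneg f)
    linarith
  set s := ‖f‖ with hs
  have hη : 0 < ε - (1 - s) := by linarith
  have hKs : (ε - (1 - s)) / δ < s := by
    rw [div_lt_iff₀ hδ]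
    rcases le_total 1 δ with h | h
    · nlinarith
    · nlinarith [mul_nonneg (sub_nonneg.2 hf) (sub_nonneg.2 h), mul_pos hδ (sub_pos.2 hδ2)]
  obtain ⟨z, ζ, hz, hζz, hζ, hxz, hfζ⟩ := exists_support_functional f (div_pos hη hδ) hKs x hx
  have hζ0 : ‖ζ‖ ≠ 0 := hζ.ne'
  refine ⟨z, ‖ζ‖⁻¹ • ζ, hz, ?_, ?_, ?_, ?_⟩
  · rw [norm_smul, norm_inv, norm_norm, inv_mul_cancel₀ hζ0]
  · simp [hζz, hζ0]
  · have h1 : (ε - (1 - s)) / δ * ‖x - z‖ ≤ (ε - (1 - s)) / δ * δ := by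
      rw [div_mul_cancel₀ _ hδ.ne']; linarith
    exact le_of_mul_le_mul_left h1 (div_pos hη hδ)
  · have h1 : ‖ζ - ‖ζ‖⁻¹ • ζ‖ = |‖ζ‖ - 1| := by
      have : ζ - ‖ζ‖⁻¹ • ζ = (1 - ‖ζ‖⁻¹) • ζ := by
        ext v
        simp [sub_mul]
      rw [this, norm_smul, Real.norm_eq_abs]
      nth_rewrite 2 [← abs_of_pos hζ]
      rw [← abs_mul, sub_mul, inv_mul_cancel₀ hζ0, one_mul]
    have h2 : |‖ζ‖ - 1| ≤ (ε - (1 - s)) / δ + (1 - s) := by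
      have h3 := (abs_norm_sub_norm_le f ζ).trans hfζ
      rw [abs_le] at h3 ⊢
      constructor <;> linarith
    have h4 := norm_sub_le_norm_sub_add_norm_sub f ζ (‖ζ‖⁻¹ • ζ)
    have h5 : 2 * ((ε - (1 - s)) / δ) + (1 - s) ≤ 2 * ε / δ := by
      have : 2 * ε / δ - 2 * ((ε - (1 - s)) / δ) = (1 - s) * (2 / δ) := by ring
      have h6 : 1 ≤ 2 / δ := by rw [le_div_iff₀ hδ]; linarith
      nlinarith
    linarith

/-! ### Operators into a space with property β -/

/-- The perturbation of `T` by a rank-one operator in the direction of a single `y_α`. -/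
lemma exists_attaining_operator {X Y : Type*} [NormedAddCommGroup X] [NormedSpace ℝ X]
    [CompleteSpace X] [NormedAddCommGroup Y] [NormedSpace ℝ Y] {ρ : ℝ} (hρ0 : 0 ≤ ρ)
    (hρ1 : ρ < 1) {Λ : Type*} {yv : Λ → Y} {yf : Λ → (Y →L[ℝ] ℝ)}
    (hyf : ∀ α, ‖yf α‖ = 1) (hone : ∀ α, yf α (yv α) = 1)
    (hoff : ∀ α γ, α ≠ γ → |yf α (yv γ)| ≤ ρ)
    (hlub : ∀ v : Y, IsLUB (Set.range fun α => |yf α v|) ‖v‖)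
    {ε δ : ℝ} (hε0 : 0 < ε) (hε1 : ε < 1) (hδ : 0 < δ) (hδ2 : δ < 2)
    (hεδ : δ ^ 2 = 2 * ε * ((1 + ρ) / (1 - ρ)))
    (x : X) (T : X →L[ℝ] Y) (hx : ‖x‖ ≤ 1) (hT : ‖T‖ ≤ 1) (α : Λ) (hα : 1 - ε < yf α (T x)) :
    ∃ (z : X) (F : X →L[ℝ] Y), ‖z‖ = 1 ∧ ‖F‖ = 1 ∧ ‖F z‖ = 1 ∧ ‖x - z‖ ≤ δ ∧ ‖T - F‖ ≤ δ := by
  have hρ : 0 < 1 - ρ := by linarith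
  have hcomp : ∀ γ, ∀ v, |yf γ (T v)| ≤ ‖v‖ := fun γ v => by
    have h1 := (yf γ).le_opNorm (T v)
    rw [hyf, one_mul, Real.norm_eq_abs] at h1
    have h2 := T.le_opNorm v
    have h3 := mul_le_mul_of_nonneg_right hT (norm_nonneg v)
    linarith
  have hbound : ∀ (G : X →L[ℝ] Y) (M : ℝ), 0 ≤ M → (∀ γ v, |yf γ (G v)| ≤ M * ‖v‖) →
      ‖G‖ ≤ M := fun G M hM h => G.opNorm_le_bound hM fun v =>
    (hlub (G v)).2 (by rintro _ ⟨γ, rfl⟩; exact h γ v)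
  have hmu : 1 ≤ (1 + ρ) / (1 - ρ) := by rw [le_div_iff₀ hρ]; linarith
  let f : X →L[ℝ] ℝ := (yf α).comp T
  have hf : ‖f‖ ≤ 1 := f.opNorm_le_bound zero_le_one fun v => by
    rw [one_mul]; exact hcomp α v
  obtain ⟨z, g, hz, hg, hgz, hxz, hfg⟩ := exists_attaining_functional f hf hε1 hδ hδ2
    (by rw [hεδ]; nlinarith) x hx hα
  set D := 2 * ε / δ with hD
  have hD0 : 0 < D := by positivity
  have hDδ : D * (1 + ρ) = δ * (1 - ρ) := by
    have h1 : δ ^ 2 * (1 - ρ) = 2 * ε * (1 + ρ) := by rw [hεδ]; field_simp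
    rw [hD]; field_simp; linarith
  set b := ρ * D / (1 - ρ) with hb
  have hb0 : 0 ≤ b := by positivity
  have hbe : b * (1 - ρ) = ρ * D := by rw [hb]; field_simp
  have hb1 : b ≤ 1 := by
    rw [hb, div_le_one hρ]
    -- From `D (1+ρ) = δ (1-ρ) < 2 (1-ρ)` and `2ρ ≤ 1+ρ`.
    nlinarith [mul_nonneg hD0.le hρ.le, mul_pos (sub_pos.2 hδ2) hρ]
  have hfgv : ∀ v, |g v - f v| ≤ D * ‖v‖ := fun v => by
    have h1 := (f - g).le_opNorm v
    have h2 := mul_le_mul_of_nonneg_right hfg (norm_nonneg v)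
    rw [Real.norm_eq_abs, sub_apply, abs_sub_comm] at h1
    linarith
  have hfv : ∀ v, |f v| ≤ ‖v‖ := hcomp α
  have hpert : ∀ v, |g v - (1 - b) * f v| ≤ (D + b) * ‖v‖ := fun v => by
    have h1 : g v - (1 - b) * f v = (g v - f v) + b * f v := by ring
    rw [h1]
    refine (abs_add_le _ _).trans ?_
    rw [abs_mul, abs_of_nonneg hb0]
    have := mul_le_mul_of_nonneg_left (hfv v) hb0
    linarith [hfgv v]
  have hDb : ρ * (D + b) = b := by linarith
  have hpertγ : ∀ γ, α ≠ γ → ∀ v, |(g v - (1 - b) * f v) * yf γ (yv α)| ≤ b * ‖v‖ := by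
    intro γ hγ v
    rw [abs_mul]
    have h1 := mul_le_mul (hpert v) (hoff γ α hγ.symm) (abs_nonneg _) (by positivity)
    calc _ ≤ _ := h1
      _ = ρ * (D + b) * ‖v‖ := by ring
      _ = b * ‖v‖ := by rw [hDb]
  let F : X →L[ℝ] Y := (1 - b) • T + (g - (1 - b) • f).smulRight (yv α)
  have hFv : ∀ γ v, yf γ (F v) = (1 - b) * yf γ (T v) +
      (g v - (1 - b) * f v) * yf γ (yv α) := by
    intro γ v
    simp [F]
  have hFα : ∀ v, yf α (F v) = g v := by
    intro v
    rw [hFv, hone]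
    change (1 - b) * f v + _ = _
    ring
  have hF1 : ‖F‖ ≤ 1 := by
    refine hbound F 1 zero_le_one fun γ v => ?_
    by_cases hγ : α = γ
    · subst hγ
      rw [hFα, ← hg]
      exact g.le_opNorm v
    · rw [hFv]
      refine (abs_add_le _ _).trans ?_
      rw [abs_mul, abs_of_nonneg (sub_nonneg.2 hb1)]
      have h1 := mul_le_mul_of_nonneg_left (hcomp γ v) (sub_nonneg.2 hb1)
      have h2 := hpertγ γ hγ v
      linarith
  have hFz : 1 ≤ ‖F z‖ := by
    have := (hlub (F z)).1 ⟨α, rfl⟩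
    simpa [hFα, hgz] using this
  have hFz2 : ‖F z‖ ≤ ‖F‖ := by simpa [hz] using F.le_opNorm z
  refine ⟨z, F, hz, by linarith, by linarith, hxz, ?_⟩
  refine hbound _ δ hδ.le fun γ v => ?_
  by_cases hγ : α = γ
  · subst hγ
    have h1 : yf α ((T - F) v) = f v - g v := by
      rw [sub_apply, map_sub, hFα]; rfl
    rw [h1, abs_sub_comm]
    have h2 : D ≤ δ := by nlinarith
    exact (hfgv v).trans (mul_le_mul_of_nonneg_right h2 (norm_nonneg v))
  · have h1 : yf γ ((T - F) v) = b * yf γ (T v) - (g v - (1 - b) * f v) * yf γ (yv α) := by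
      rw [sub_apply, map_sub, hFv]; ring
    rw [h1]
    refine (abs_sub _ _).trans ?_
    rw [abs_mul, abs_of_nonneg hb0]
    have h2 := mul_le_mul_of_nonneg_left (hcomp γ v) hb0
    have h3 := hpertγ γ hγ v
    have h4 : 2 * b ≤ δ := by
      refine le_of_mul_le_mul_right ?_ hρ
      nlinarith [mul_nonneg hD0.le hρ.le]
    have h5 := mul_le_mul_of_nonneg_right h4 (norm_nonneg v)
    linarith

/-! ### The bound on the moduli -/

theorem phi_le_of_propertyBeta
    (X : Type*) [NormedAddCommGroup X] [NormedSpace ℝ X] [CompleteSpace X]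
    (Y : Type*) [NormedAddCommGroup Y] [NormedSpace ℝ Y] [CompleteSpace Y] [Nontrivial Y]
    (ρ : ℝ) (hρ : ρ ∈ Set.Ico (0 : ℝ) 1) (hβ : PropertyBeta Y ρ)
    (ε : ℝ) (hε : ε ∈ Set.Ioo (0 : ℝ) 1) :
    PhiS X Y ε ≤ Phi X Y ε ∧
      Phi X Y ε ≤ min (Real.sqrt (2 * ε) * Real.sqrt ((1 + ρ) / (1 - ρ))) 2 := by
  obtain ⟨hρ0, hρ1⟩ := hρ
  obtain ⟨hε0, hε1⟩ := hε
  obtain ⟨Λ, yv, yf, hyv, hyf, hone, hoff, hlub⟩ := hβ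
  set δ := Real.sqrt (2 * ε) * Real.sqrt ((1 + ρ) / (1 - ρ)) with hδdef
  have hμ : 0 < (1 + ρ) / (1 - ρ) := div_pos (by linarith) (by linarith)
  have hδ : 0 < δ := mul_pos (Real.sqrt_pos.2 (by linarith)) (Real.sqrt_pos.2 hμ)
  have hδsq : δ ^ 2 = 2 * ε * ((1 + ρ) / (1 - ρ)) := by
    rw [hδdef, mul_pow, Real.sq_sqrt (by linarith), Real.sq_sqrt hμ.le]
  have key : ∀ (x : X) (T : X →L[ℝ] Y), ‖x‖ ≤ 1 → ‖T‖ ≤ 1 → 1 - ε < ‖T x‖ →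
      ∃ (z : X) (F : X →L[ℝ] Y), ‖z‖ = 1 ∧ ‖F‖ = 1 ∧ ‖F z‖ = 1 ∧
        ‖x - z‖ ≤ min δ 2 ∧ ‖T - F‖ ≤ min δ 2 := by
    intro x T hx hT hTx
    rcases lt_or_ge δ 2 with hδ2 | hδ2
    · rw [min_eq_left hδ2.le]
      obtain ⟨_, ⟨α, rfl⟩, hα, -⟩ := (hlub (T x)).exists_between hTx
      rcases lt_abs.1 hα with h | h
      · exact exists_attaining_operator hρ0 hρ1 hyf hone hoff hlub hε0 hε1 hδ hδ2 hδsq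
          x T hx hT α h
      · obtain ⟨z, F, hz, hF, hFz, hxz, hTF⟩ := exists_attaining_operator hρ0 hρ1 hyf hone hoff
          hlub hε0 hε1 hδ hδ2 hδsq (-x) T (by rwa [norm_neg]) hT α (by simpa using h)
        refine ⟨-z, F, by rwa [norm_neg], hF, by rwa [map_neg, norm_neg], ?_, hTF⟩
        rwa [sub_neg_eq_add, ← norm_neg, neg_add']
    · rw [min_eq_right hδ2]
      have hx0 : ‖x‖ ≠ 0 := by
        intro h
        rw [norm_eq_zero.1 h, map_zero, norm_zero] at hTx
        linarith
      obtain ⟨y, hy⟩ := exists_norm_eq Y zero_le_one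
      obtain ⟨g, hg, hgx⟩ := exists_dual_vector ℝ x hx0
      have hz : ‖‖x‖⁻¹ • x‖ = 1 := by
        rw [norm_smul, norm_inv, norm_norm, inv_mul_cancel₀ hx0]
      have hF : ‖g.smulRight y‖ = 1 := by
        rw [ContinuousLinearMap.norm_smulRight_apply, hg, hy, one_mul]
      refine ⟨‖x‖⁻¹ • x, g.smulRight y, hz, hF, ?_, ?_, ?_⟩
      · simp [hgx, hx0, hy]
      · exact (norm_sub_le _ _).trans (by linarith)
      · exact (norm_sub_le _ _).trans (by linarith)
  have hmem : ∀ δ', min δ 2 < δ' → δ' ∈ {δ : ℝ | 0 < δ ∧ ∀ (x : X) (T : X →L[ℝ] Y),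
      ‖x‖ ≤ 1 → ‖T‖ ≤ 1 → 1 - ε < ‖T x‖ → ∃ (z : X) (F : X →L[ℝ] Y),
        ‖z‖ = 1 ∧ ‖F‖ = 1 ∧ ‖F z‖ = 1 ∧ ‖x - z‖ < δ ∧ ‖T - F‖ < δ} := by
    intro δ' h
    refine ⟨(lt_min hδ two_pos).trans h, fun x T hx hT hTx => ?_⟩
    obtain ⟨z, F, hz, hF, hFz, hxz, hTF⟩ := key x T hx hT hTx
    exact ⟨z, F, hz, hF, hFz, hxz.trans_lt h, hTF.trans_lt h⟩
  constructor
  · exact csInf_le_csInf ⟨0, fun d hd => hd.1.le⟩ ⟨_, hmem (min δ 2 + 1) (by linarith)⟩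
      fun d hd => ⟨hd.1, fun x T hx hT => hd.2 x T hx.le hT.le⟩
  · exact le_of_forall_gt_imp_ge_of_dense fun d hd =>
      csInf_le ⟨0, fun d hd => hd.1.le⟩ (hmem d hd)
end
end

section
/- Let X be a real Banach space, ε ∈ (0,1), x ∈ X with ‖x‖ ≤ 1, and x* a continuous linear functional on X with ‖x*‖ ≤ 1 and x*(x) > 1 − ε. Then for any k ∈ (0,1) there exist a continuous linear functional y* on X and z ∈ X with ‖z‖ = 1 such that y*(z) = ‖y*‖, ‖x − z‖ < (1 − (1−ε)/‖x*‖)/k, and ‖x* − y*‖ < k·‖x*‖. -/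
/-!
After dividing by `‖xs‖` the functional `f` has norm one and `f x > 1 - η`, where
`η = 1 - (1 - ε) / ‖xs‖`. Since this inequality is strict, there is `c < k` with
`(1 - f x) / c < η / k`, so it is enough to prove the non-strict estimates with `c` for `k`.

Order the closed unit ball `B` by `y ≼ w ↔ c * ‖w - y‖ ≤ f w - f y`. As `f` is bounded above on
`B`, there is a maximal element `z ≽ x` (`exists_maximal_point`, the Bishop–Phelps form of
Ekeland's principle), and `c * ‖z - x‖ ≤ f z - f x ≤ 1 - f x`. Maximality says that the functional
`f` minus its value at `z` lies below `c * ‖y - z‖` on `B`; by Hahn–Banach, some linear functional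
`ψ` fits between them (`exists_sandwich`). Then `g = f - ψ` attains its supremum over `B` at `z`,
and `‖f - g‖ = ‖ψ‖ ≤ c < 1 = ‖f‖`. In particular `g ≠ 0`, which forces `‖z‖ = 1`.
-/

/-- In the order `y ≼ w ↔ c * ‖w - y‖ ≤ f w - f y` on a closed set `B` on which `f` is bounded
above, every point lies below a maximal one. The maximal point is the limit of an increasing
sequence whose `(n + 1)`-st term maximizes `f` up to `1 / (n + 1)` above the `n`-th term: the sets
of points above the terms of the sequence then shrink to a single point. -/
lemma exists_maximal_point {X : Type*} [NormedAddCommGroup X] [NormedSpace ℝ X] [CompleteSpace X]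
    (f : X →L[ℝ] ℝ) {B : Set X} (hB : IsClosed B) {M : ℝ} (hM : ∀ y ∈ B, f y ≤ M)
    {c : ℝ} (hc : 0 < c) {x : X} (hx : x ∈ B) :
    ∃ z ∈ B, c * ‖z - x‖ ≤ f z - f x ∧ ∀ y ∈ B, f y - f z ≤ c * ‖y - z‖ := by
  have step : ∀ (n : ℕ) (y : B), ∃ w : B, c * ‖(w : X) - y‖ ≤ f w - f y ∧
      ∀ v ∈ B, c * ‖v - y‖ ≤ f v - f y → f v ≤ f w + 1 / ((n : ℝ) + 1) := by
    intro n y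
    set T : Set ℝ := f '' {v | v ∈ B ∧ c * ‖v - y‖ ≤ f v - f y} with hT
    have hne : T.Nonempty := ⟨f y, y, ⟨y.2, by simp⟩, rfl⟩
    have hbd : BddAbove T := ⟨M, by rintro _ ⟨v, hv, rfl⟩; exact hM v hv.1⟩
    have hpos : (0 : ℝ) < 1 / ((n : ℝ) + 1) := by positivity
    obtain ⟨_, ⟨w, hw, rfl⟩, hlt⟩ := exists_lt_of_lt_csSup hne (sub_lt_self (sSup T) hpos)
    refine ⟨⟨w, hw.1⟩, hw.2, fun v hv hvy => ?_⟩
    have := le_csSup hbd (show f v ∈ T from ⟨v, ⟨hv, hvy⟩, rfl⟩)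
    simp only
    linarith
  have trans : ∀ u v w : X, c * ‖v - u‖ ≤ f v - f u → c * ‖w - v‖ ≤ f w - f v →
      c * ‖w - u‖ ≤ f w - f u := by
    intro u v w h1 h2
    have h3 := mul_le_mul_of_nonneg_left (norm_sub_le_norm_sub_add_norm_sub w v u) hc.le
    linarith
  choose F hF1 hF2 using step
  obtain ⟨s, hs0, hs⟩ : ∃ s : ℕ → B, (s 0 : X) = x ∧ ∀ n, s (n + 1) = F n (s n) :=
    ⟨fun n => Nat.rec ⟨x, hx⟩ (fun n y => F n y) n, rfl, fun _ => rfl⟩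
  have hmono : ∀ n m : ℕ, n ≤ m → c * ‖(s m : X) - s n‖ ≤ f (s m) - f (s n) := by
    intro n m h
    induction m, h using Nat.le_induction with
    | base => simp
    | succ m _ ih =>
      refine trans _ _ _ ih ?_
      rw [hs]
      exact hF1 m (s m)
  have hsmall : ∀ n : ℕ, ∀ w ∈ B, c * ‖w - s (n + 1)‖ ≤ f w - f (s (n + 1) : X) →
      ‖w - s (n + 1)‖ ≤ (1 / ((n : ℝ) + 1)) / c := by
    intro n w hw h
    have h1 := hF2 n (s n) w hw (trans _ _ _ (hmono n (n + 1) n.le_succ) h)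
    rw [← hs] at h1
    rw [le_div_iff₀ hc]
    linarith
  have hlim : Filter.Tendsto (fun n : ℕ => (1 / ((n : ℝ) + 1)) / c) Filter.atTop (nhds 0) := by
    simpa using (tendsto_one_div_add_atTop_nhds_zero_nat (𝕜 := ℝ)).div_const c
  have hcau : CauchySeq (fun n => (s (n + 1) : X)) := by
    refine cauchySeq_of_le_tendsto_0' (fun n : ℕ => (1 / ((n : ℝ) + 1)) / c) ?_ hlim
    intro n m h
    rw [dist_comm, dist_eq_norm]
    exact hsmall n _ (s (m + 1)).2 (hmono _ _ (by omega))
  obtain ⟨z, hz⟩ := cauchySeq_tendsto_of_complete hcau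
  have hzB : z ∈ B := hB.mem_of_tendsto hz (Filter.Eventually.of_forall fun n => (s (n + 1)).2)
  have hzs : ∀ n : ℕ, c * ‖z - s n‖ ≤ f z - f (s n : X) := by
    intro n
    refine le_of_tendsto_of_tendsto ((hz.sub_const (s n : X)).norm.const_mul c)
      (((f.continuous.tendsto z).comp hz).sub_const _) ?_
    filter_upwards [Filter.eventually_ge_atTop n] with m hm
    exact hmono _ _ (by omega)
  refine ⟨z, hzB, hs0 ▸ hzs 0, fun y hy => ?_⟩
  by_contra! hlt
  have hyz : Filter.Tendsto (fun n => (s (n + 1) : X)) Filter.atTop (nhds y) := by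
    rw [tendsto_iff_norm_sub_tendsto_zero]
    refine squeeze_zero (fun _ => norm_nonneg _) (fun n => ?_) hlim
    rw [norm_sub_rev]
    exact hsmall n y hy (trans _ _ _ (hzs _) hlt.le)
  rw [tendsto_nhds_unique hyz hz] at hlt
  simp at hlt

/-- If `f (y - z) ≤ c * ‖y - z‖` on a convex set `B` containing `z`, some functional `ψ` of norm at
most `c` still dominates `f (y - z)` on `B`. It comes from separating, in `X × ℝ`, the open cone
above the graph of `c * ‖·‖` from the part of `(B - z) × ℝ` below the graph of `f`. -/
lemma exists_sandwich {X : Type*} [NormedAddCommGroup X] [NormedSpace ℝ X]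
    (f : X →L[ℝ] ℝ) {B : Set X} (hB : Convex ℝ B) {c : ℝ} (hc : 0 < c) {z : X} (hz : z ∈ B)
    (h : ∀ y ∈ B, f y - f z ≤ c * ‖y - z‖) :
    ∃ ψ : X →L[ℝ] ℝ, ‖ψ‖ ≤ c ∧ ∀ y ∈ B, f y - f z ≤ ψ y - ψ z := by
  let A : Set (X × ℝ) := {p | c * ‖p.1‖ < p.2}
  let C : Set (X × ℝ) := {p | p.1 + z ∈ B ∧ p.2 ≤ f p.1}
  have hAo : IsOpen A := isOpen_lt (by fun_prop) (by fun_prop)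
  have hAc : Convex ℝ A := by
    rintro ⟨u, s⟩ hu ⟨v, t⟩ hv a b ha hb hab
    simp only [A, Set.mem_ofPred_eq, Prod.smul_mk, Prod.mk_add_mk, smul_eq_mul] at hu hv ⊢
    have h1 : ‖a • u + b • v‖ ≤ a * ‖u‖ + b * ‖v‖ := by
      refine (norm_add_le _ _).trans_eq ?_
      rw [norm_smul, norm_smul, Real.norm_of_nonneg ha, Real.norm_of_nonneg hb]
    have h2 := mul_le_mul_of_nonneg_left h1 hc.le
    rcases ha.eq_or_lt with rfl | ha
    · have : b = 1 := by linarith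
      subst this
      linarith
    · nlinarith [mul_lt_mul_of_pos_left hu ha, mul_le_mul_of_nonneg_left hv.le hb]
  have hCc : Convex ℝ C := by
    rintro ⟨u, s⟩ ⟨hu, hs⟩ ⟨v, t⟩ ⟨hv, ht⟩ a b ha hb hab
    refine ⟨?_, ?_⟩
    · have := hB hu hv ha hb hab
      have e : a • (u + z) + b • (v + z) = a • u + b • v + z := by
        rw [smul_add, smul_add, add_add_add_comm, ← add_smul, hab, one_smul]
      rwa [e] at this
    · simp only [Prod.smul_mk, Prod.mk_add_mk, smul_eq_mul, map_add, map_smul] at hs ht ⊢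
      gcongr
  have hdisj : Disjoint A C := by
    rw [Set.disjoint_left]
    rintro ⟨u, s⟩ hu ⟨hv, hs⟩
    have := h _ hv
    simp only [A, Set.mem_ofPred_eq, add_sub_cancel_right, map_add] at this hu hs
    linarith
  obtain ⟨F, u, hFA, hFC⟩ := geometric_hahn_banach_open hAc hAo hCc hdisj
  have hu0 : u ≤ 0 := by
    have := hFC (0, 0) (by simpa [C] using hz)
    rwa [show F ((0 : X), (0 : ℝ)) = 0 from map_zero F] at this
  have hsplit : ∀ v t, F (v, t) = F (v, 0) + t * F (0, 1) := by
    intro v t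
    rw [← smul_eq_mul, ← map_smul, ← map_add]
    simp
  have hneg : F (0, 1) < 0 := lt_of_lt_of_le (hFA (0, 1) (by simp [A])) hu0
  -- Points of the cone approach the origin, so the separating constant vanishes.
  have hu : 0 ≤ u := by
    have h1 : ∀ t : ℝ, 0 < t → t * F (0, 1) < u := by
      intro t ht
      have := hFA (0, t) (by simpa [A] using ht)
      rw [hsplit] at this
      have e : F ((0 : X), (0 : ℝ)) = 0 := map_zero F
      linarith
    by_contra! hlt
    have h2 := h1 (u / F (0, 1)) (div_pos_of_neg_of_neg hlt hneg)
    rw [div_mul_cancel₀ _ hneg.ne] at h2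
    exact lt_irrefl _ h2
  set d : ℝ := -F (0, 1) with hd
  have hdpos : 0 < d := by linarith
  let ψ : X →L[ℝ] ℝ := d⁻¹ • F.comp (ContinuousLinearMap.inl ℝ X ℝ)
  have hψ : ∀ v, F (v, 0) = d * ψ v := by
    intro v
    simp [ψ, hdpos.ne']
  have hψle : ∀ v, ψ v ≤ c * ‖v‖ := by
    intro v
    refine le_of_forall_gt_imp_ge_of_dense fun t ht => ?_
    have h1 := hFA (v, t) ht
    rw [hsplit, hψ] at h1
    refine le_of_mul_le_mul_left ?_ hdpos
    linarith
  refine ⟨ψ, ψ.opNorm_le_bound hc.le fun v => ?_, fun y hy => ?_⟩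
  · rw [Real.norm_eq_abs, abs_le]
    refine ⟨?_, hψle v⟩
    have := hψle (-v)
    rw [map_neg, norm_neg] at this
    linarith
  · have h1 := hFC (y - z, f (y - z)) (by simpa [C] using hy)
    rw [hsplit, hψ] at h1
    rw [← map_sub, ← map_sub]
    refine le_of_mul_le_mul_left ?_ hdpos
    linarith

/-- The Bishop–Phelps–Bollobás estimate for a functional of norm one, with non-strict bounds. -/
lemma exists_attaining_near {X : Type*} [NormedAddCommGroup X] [NormedSpace ℝ X] [CompleteSpace X]
    (f : X →L[ℝ] ℝ) (hf : ‖f‖ = 1) {x : X} (hx : ‖x‖ ≤ 1) {c : ℝ} (hc : 0 < c) (hc1 : c < 1) :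
    ∃ (g : X →L[ℝ] ℝ) (z : X), ‖z‖ = 1 ∧ g z = ‖g‖ ∧ c * ‖x - z‖ ≤ 1 - f x ∧ ‖f - g‖ ≤ c := by
  have hM : ∀ y ∈ Metric.closedBall (0 : X) 1, f y ≤ 1 := by
    intro y hy
    rw [mem_closedBall_zero_iff] at hy
    have := (le_abs_self _).trans (f.le_opNorm y)
    rw [hf] at this
    linarith
  obtain ⟨z, hzB, hzx, hmax⟩ := exists_maximal_point f Metric.isClosed_closedBall hM hc
    (mem_closedBall_zero_iff.mpr hx)
  obtain ⟨ψ, hψ, hψf⟩ := exists_sandwich f (convex_closedBall (0 : X) 1) hc hzB hmax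
  have hz1 : ‖z‖ ≤ 1 := mem_closedBall_zero_iff.mp hzB
  set g := f - ψ with hg
  have hgmax : ∀ y : X, ‖y‖ ≤ 1 → g y ≤ g z := by
    intro y hy
    have := hψf y (mem_closedBall_zero_iff.mpr hy)
    simp only [hg, sub_apply]
    linarith
  have hgle : ‖g‖ ≤ g z := by
    refine g.opNorm_le_of_unit_norm (by simpa using hgmax 0 (by simp)) fun y hy => ?_
    rw [Real.norm_eq_abs, abs_le]
    refine ⟨?_, hgmax y hy.le⟩
    have := hgmax (-y) (by simpa using hy.le)
    rw [map_neg] at this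
    linarith
  have hgz : g z ≤ ‖g‖ * ‖z‖ := (le_abs_self _).trans (g.le_opNorm z)
  have hgpos : 0 < ‖g‖ := by
    have := norm_sub_norm_le f ψ
    rw [← hg] at this
    linarith
  refine ⟨g, z, ?_, ?_, ?_, by simpa [hg] using hψ⟩
  · refine le_antisymm hz1 (le_of_mul_le_mul_left ?_ hgpos)
    linarith
  · nlinarith
  · rw [norm_sub_rev]
    linarith [hM z hzB]

theorem bpb_lemma_part_one
    (X : Type*) [NormedAddCommGroup X] [NormedSpace ℝ X] [CompleteSpace X]
    (ε : ℝ) (hε : ε ∈ Set.Ioo (0 : ℝ) 1)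
    (x : X) (hx : ‖x‖ ≤ 1)
    (xs : X →L[ℝ] ℝ) (hxs : ‖xs‖ ≤ 1) (hxsx : 1 - ε < xs x)
    (k : ℝ) (hk : k ∈ Set.Ioo (0 : ℝ) 1) :
    ∃ (ys : X →L[ℝ] ℝ) (z : X), ‖z‖ = 1 ∧ ys z = ‖ys‖ ∧
      ‖x - z‖ < (1 - (1 - ε) / ‖xs‖) / k ∧ ‖xs - ys‖ < k * ‖xs‖ := by
  obtain ⟨hε0, hε1⟩ := hε
  obtain ⟨hk0, hk1⟩ := hk
  have hxle : xs x ≤ ‖xs‖ * ‖x‖ := (le_abs_self _).trans (xs.le_opNorm x)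
  have hN : 0 < ‖xs‖ := by
    by_contra! h0
    nlinarith [norm_nonneg x]
  set N := ‖xs‖ with hNdef
  set f : X →L[ℝ] ℝ := N⁻¹ • xs with hf
  have hf1 : ‖f‖ = 1 := by
    rw [hf, norm_smul, norm_inv, Real.norm_of_nonneg hN.le]
    exact inv_mul_cancel₀ hN.ne'
  have hfx : f x = xs x / N := by
    simp [hf, div_eq_inv_mul]
  set η : ℝ := 1 - (1 - ε) / N with hη
  have hlt : 1 - f x < η := by
    rw [hfx, hη]
    have := div_lt_div_of_pos_right hxsx hN
    linarith
  have hfx1 : 0 ≤ 1 - f x := by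
    rw [hfx, sub_nonneg, div_le_one hN]
    nlinarith
  have hηpos : 0 < η := by linarith
  -- Any `c` strictly between `k * (1 - f x) / η` and `k` makes both final estimates strict.
  obtain ⟨c, hc1, hc2⟩ : ∃ c, k * (1 - f x) / η < c ∧ c < k := by
    refine exists_between ?_
    rw [div_lt_iff₀ hηpos]
    exact mul_lt_mul_of_pos_left hlt hk0
  have hc0 : 0 < c := lt_of_le_of_lt (by positivity) hc1
  obtain ⟨g, z, hz, hgz, hxz, hfg⟩ := exists_attaining_near f hf1 hx hc0 (hc2.trans hk1)
  refine ⟨N • g, z, hz, ?_, ?_, ?_⟩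
  · rw [norm_smul, Real.norm_of_nonneg hN.le, ← hgz]
    simp
  · rw [div_lt_iff₀ hηpos] at hc1
    rw [lt_div_iff₀ hk0]
    refine lt_of_mul_lt_mul_left ?_ hc0.le
    nlinarith
  · have e : xs - N • g = N • (f - g) := by
      rw [smul_sub, hf, smul_inv_smul₀ hN.ne']
    rw [e, norm_smul, Real.norm_of_nonneg hN.le, mul_comm]
    exact mul_lt_mul_of_pos_right (hfg.trans_lt hc2) hN
end

section
/- Let X be a real Banach space, ε ∈ (0,1), x ∈ X with ‖x‖ ≤ 1, and x* a continuous linear functional on X with ‖x*‖ ≤ 1 and x*(x) > 1 − ε. Then for any k ∈ [ε/2, 1) there exist a continuous linear functional z* on X with ‖z*‖ = 1 and z ∈ X with ‖z‖ = 1 such that z*(z) = 1, ‖x − z‖ < ε/k, and ‖x* − z*‖ < 2k. -/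
/-!
The argument is the Bishop–Phelps–Bollobás theorem with constants tracked.

Ekeland's principle (`exists_ekeland`), applied to a functional `f` on the closed unit ball, moves
an almost maximizing point `x` a small distance to a point `z` where `y ↦ f y - κ * ‖y - z‖` is
maximal on the ball. Separating the epigraph of `κ * ‖·‖` from the part of the hypograph of `f`
above the translated ball (`exists_support_of_ekeland`) yields a functional `g` with `‖g‖ ≤ κ` such
that `f - g` attains its maximum over the ball at `z`. Rescaling `f - g` to norm one gives the
result.

The bound `2 * k` comes from the choice of parameters. With `t = ‖xs‖`, the point `x` is
maximizing for `xs` up to `δ = t - (1 - ε)`, and Ekeland's principle is run with slope slightly below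
`κ = k * δ / ε`, so that `z` lies within `δ / κ = ε / k` of `x`. Rescaling costs at most
`1 - t + κ`, for a total of `2 * κ + (1 - t)`, and this is at most `2 * k` precisely because
`ε / 2 ≤ k`.
-/

/-- Ekeland's variational principle, for the maximum of a continuous function bounded above. -/
theorem exists_ekeland {α : Type*} [MetricSpace α] [CompleteSpace α] (f : α → ℝ)
    (hf : Continuous f) (M : ℝ) (hM : ∀ y, f y ≤ M) (κ : ℝ) (hκ : 0 < κ) (x : α) :
    ∃ z, f x + κ * dist x z ≤ f z ∧ ∀ y, f y ≤ f z + κ * dist z y := by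
  -- The relation `R a y`, given by `f a + κ * dist a y ≤ f y`, is a closed partial order.
  have trans : ∀ a b c, f a + κ * dist a b ≤ f b → f b + κ * dist b c ≤ f c →
      f a + κ * dist a c ≤ f c := by
    intro a b c h1 h2
    have := mul_le_mul_of_nonneg_left (dist_triangle a b c) hκ.le
    linarith
  have step : ∀ (n : ℕ) (a : α), ∃ b, f a + κ * dist a b ≤ f b ∧
      ∀ y, f b + κ * dist b y ≤ f y → f y ≤ f b + 1 / ((n : ℝ) + 1) := by
    intro n a
    let S : Set ℝ := f '' {y | f a + κ * dist a y ≤ f y}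
    have hS : S.Nonempty := ⟨f a, a, by simp, rfl⟩
    have hB : BddAbove S := ⟨M, by rintro _ ⟨y, -, rfl⟩; exact hM y⟩
    have hpos : (0 : ℝ) < 1 / ((n : ℝ) + 1) := by positivity
    obtain ⟨_, ⟨b, hb, rfl⟩, hlt⟩ := exists_lt_of_lt_csSup hS (sub_lt_self (sSup S) hpos)
    refine ⟨b, hb, fun y hy => ?_⟩
    have := le_csSup hB ⟨y, trans a b y hb hy, rfl⟩
    linarith
  choose F hF1 hF2 using step
  let u : ℕ → α := fun n => Nat.rec x (fun n a => F n a) n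
  have hu : ∀ n, u (n + 1) = F n (u n) := fun n => rfl
  have hmono : ∀ n m, n ≤ m → f (u n) + κ * dist (u n) (u m) ≤ f (u m) := by
    intro n m h
    induction m, h using Nat.le_induction with
    | base => simp
    | succ m _ ih => exact trans _ _ _ ih (by rw [hu]; exact hF1 m (u m))
  have hgap : ∀ n y, f (u (n + 1)) + κ * dist (u (n + 1)) y ≤ f y →
      f y ≤ f (u (n + 1)) + 1 / ((n : ℝ) + 1) := by
    intro n y hy
    rw [hu] at hy ⊢
    exact hF2 n _ y hy
  have hcau : CauchySeq fun n => u (n + 1) := by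
    refine cauchySeq_of_le_tendsto_0' (fun n : ℕ => 1 / ((n : ℝ) + 1) / κ) ?_ ?_
    · intro n m h
      have h1 := hmono (n + 1) (m + 1) (by omega)
      have h2 := hgap n _ h1
      rw [le_div_iff₀ hκ]
      linarith
    · simpa using (tendsto_one_div_add_atTop_nhds_zero_nat (𝕜 := ℝ)).div_const κ
  obtain ⟨z, hz⟩ := cauchySeq_tendsto_of_complete hcau
  have hlim : ∀ n, f (u n) + κ * dist (u n) z ≤ f z := by
    intro n
    refine le_of_tendsto_of_tendsto
      (((tendsto_const_nhds.dist hz).const_mul κ).const_add (f (u n)))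
      ((hf.tendsto z).comp hz) ?_
    filter_upwards [Filter.eventually_ge_atTop n] with m hm
    exact hmono n (m + 1) (by omega)
  refine ⟨z, hlim 0, fun y => ?_⟩
  by_contra! hy
  have hle : ∀ n : ℕ, f y ≤ f z + 1 / ((n : ℝ) + 1) := by
    intro n
    have h1 := hgap n y (trans _ z y (hlim (n + 1)) hy.le)
    have h2 := hlim (n + 1)
    have h3 : 0 ≤ κ * dist (u (n + 1)) z := by positivity
    linarith
  have h1 : f y ≤ f z := by
    refine ge_of_tendsto' (x := Filter.atTop) ?_ hle
    simpa using (tendsto_one_div_add_atTop_nhds_zero_nat (𝕜 := ℝ)).const_add (f z)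
  have h2 : 0 ≤ κ * dist z y := by positivity
  linarith

/-- A point of the unit ball that is maximal for `f` up to slope `κ` is a maximum point over the
ball of a functional within `κ` of `f`. -/
theorem exists_support_of_ekeland {X : Type*} [NormedAddCommGroup X] [NormedSpace ℝ X]
    (f : X →L[ℝ] ℝ) (κ : ℝ) (hκ : 0 < κ) (z : X) (hz : ‖z‖ ≤ 1)
    (hmax : ∀ y : X, ‖y‖ ≤ 1 → f y ≤ f z + κ * ‖y - z‖) :
    ∃ g : X →L[ℝ] ℝ, ‖g‖ ≤ κ ∧ ∀ y : X, ‖y‖ ≤ 1 → (f - g) y ≤ (f - g) z := by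
  let A : Set (X × ℝ) := {p | κ * ‖p.1‖ < p.2}
  let C : Set (X × ℝ) := {p | ‖p.1 + z‖ ≤ 1 ∧ p.2 ≤ f p.1}
  have hAo : IsOpen A := isOpen_lt (by fun_prop) (by fun_prop)
  have hAc : Convex ℝ A := by
    intro p hp q hq a b ha hb hab
    simp only [A, Set.mem_ofPred_eq, Prod.fst_add, Prod.snd_add, Prod.smul_fst, Prod.smul_snd,
      smul_eq_mul] at hp hq ⊢
    have h1 : ‖a • p.1 + b • q.1‖ ≤ a * ‖p.1‖ + b * ‖q.1‖ := by
      refine (norm_add_le _ _).trans ?_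
      rw [norm_smul, norm_smul, Real.norm_of_nonneg ha, Real.norm_of_nonneg hb]
    have h2 := mul_le_mul_of_nonneg_left h1 hκ.le
    rcases ha.eq_or_lt with rfl | ha
    · have : b = 1 := by linarith
      subst this
      simpa using hq
    · have h3 := mul_lt_mul_of_pos_left hp ha
      have h4 := mul_le_mul_of_nonneg_left hq.le hb
      nlinarith
  have hCc : Convex ℝ C := by
    intro p hp q hq a b ha hb hab
    simp only [C, Set.mem_ofPred_eq, Prod.fst_add, Prod.snd_add, Prod.smul_fst, Prod.smul_snd,
      smul_eq_mul, map_add, map_smul] at hp hq ⊢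
    constructor
    · have h0 : a • p.1 + b • q.1 + z = a • (p.1 + z) + b • (q.1 + z) := by
        have : z = (a + b) • z := by rw [hab, one_smul]
        nth_rewrite 1 [this]
        module
      have h := (convex_closedBall (0 : X) 1) (mem_closedBall_zero_iff.2 hp.1)
        (mem_closedBall_zero_iff.2 hq.1) ha hb hab
      rw [h0]
      exact mem_closedBall_zero_iff.1 h
    · exact add_le_add (mul_le_mul_of_nonneg_left hp.2 ha) (mul_le_mul_of_nonneg_left hq.2 hb)
  have hdis : Disjoint A C := by
    rw [Set.disjoint_left]
    rintro p hp ⟨h1, h2⟩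
    have h3 := hmax _ h1
    simp only [A, Set.mem_ofPred_eq] at hp
    rw [map_add, add_sub_cancel_right] at h3
    linarith
  obtain ⟨φ, c, hA, hC⟩ := geometric_hahn_banach_open hAc hAo hCc hdis
  have hsplit : ∀ (h : X) (r : ℝ), φ (h, r) = φ (h, 0) + r * φ (0, 1) := by
    intro h r
    rw [← smul_eq_mul, ← map_smul, ← map_add]
    simp
  -- The origin lies in `C` and in the closure of `A`, so the separating level is `0`.
  have hc0 : c ≤ 0 := by
    have := hC 0 (by simp [C, hz])
    rwa [map_zero] at this
  have hα : φ (0, 1) < 0 := (hA (0, 1) (by simp [A])).trans_le hc0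
  have hc : 0 ≤ c := by
    have ht : Filter.Tendsto (fun n : ℕ => 1 / ((n : ℝ) + 1) * φ (0, 1)) Filter.atTop
        (nhds (0 * φ (0, 1))) :=
      (tendsto_one_div_add_atTop_nhds_zero_nat (𝕜 := ℝ)).mul_const _
    rw [zero_mul] at ht
    refine le_of_tendsto' ht fun n => ?_
    have hn : ((0 : X), 1 / ((n : ℝ) + 1)) ∈ A := by
      simp only [A, Set.mem_ofPred_eq, norm_zero, mul_zero]
      positivity
    have := hA _ hn
    rw [hsplit, show ((0 : X), (0 : ℝ)) = 0 from rfl, map_zero, zero_add] at this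
    exact this.le
  let g : X →L[ℝ] ℝ := (-φ (0, 1))⁻¹ • φ.comp (ContinuousLinearMap.inl ℝ X ℝ)
  have hg : ∀ h, φ (h, 0) = -φ (0, 1) * g h := by
    intro h
    simp only [g, smul_apply, ContinuousLinearMap.comp_apply,
      ContinuousLinearMap.inl_apply, smul_eq_mul]
    rw [mul_inv_cancel_left₀ (by linarith)]
  have hgle : ∀ h, g h ≤ κ * ‖h‖ := by
    intro h
    refine le_of_forall_gt_imp_ge_of_dense fun r hr => ?_
    have h1 := hA (h, r) hr
    rw [hsplit, hg] at h1
    nlinarith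
  refine ⟨g, ContinuousLinearMap.opNorm_le_bound _ hκ.le fun h => ?_, fun y hy => ?_⟩
  · rw [Real.norm_eq_abs, abs_le']
    refine ⟨hgle h, ?_⟩
    simpa using hgle (-h)
  · have h1 := hC (y - z, f (y - z)) (by simp [C, hy])
    rw [hsplit, hg] at h1
    have h2 : f (y - z) ≤ g (y - z) := by nlinarith
    rw [map_sub, map_sub] at h2
    simp only [sub_apply]
    linarith

/-- Bishop–Phelps–Bollobás before normalization: the supporting functional `y'` need not have norm
one, and `f` is an arbitrary functional of norm larger than `κ`. -/
theorem exists_support_near {X : Type*} [NormedAddCommGroup X] [NormedSpace ℝ X] [CompleteSpace X]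
    (f : X →L[ℝ] ℝ) (x : X) (hx : ‖x‖ ≤ 1) (δ κ : ℝ) (hκ : 0 < κ) (hκf : κ < ‖f‖)
    (hfx : ‖f‖ - δ < f x) :
    ∃ (y' : X →L[ℝ] ℝ) (z : X), 0 < ‖y'‖ ∧ ‖z‖ = 1 ∧ y' z = ‖y'‖ ∧ ‖x - z‖ < δ / κ ∧
      ‖f - y'‖ < κ := by
  have hbd : ∀ y : X, ‖y‖ ≤ 1 → f y ≤ ‖f‖ := fun y hy =>
    (le_abs_self _).trans (f.unit_le_opNorm y hy)
  have hδ : 0 < δ := by linarith [hbd x hx]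
  -- A slope strictly between `κ * (‖f‖ - f x) / δ` and `κ` makes both estimates strict.
  obtain ⟨κ', h1, h2⟩ : ∃ κ', κ * (‖f‖ - f x) / δ < κ' ∧ κ' < κ := by
    refine exists_between ?_
    rw [div_lt_iff₀ hδ]
    nlinarith
  have hκ' : 0 < κ' := by
    refine lt_of_le_of_lt ?_ h1
    have := hbd x hx
    have : 0 ≤ ‖f‖ - f x := by linarith
    positivity
  have : CompleteSpace (Metric.closedBall (0 : X) 1) :=
    Metric.isClosed_closedBall.completeSpace_coe
  obtain ⟨⟨z, hz⟩, hz1, hz2⟩ := exists_ekeland (fun y : Metric.closedBall (0 : X) 1 => f y)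
    (by fun_prop) ‖f‖ (fun y => hbd _ (mem_closedBall_zero_iff.1 y.2)) κ' hκ'
    ⟨x, mem_closedBall_zero_iff.2 hx⟩
  rw [mem_closedBall_zero_iff] at hz
  simp only [Subtype.dist_eq, dist_eq_norm] at hz1 hz2
  obtain ⟨g, hg, hgm⟩ := exists_support_of_ekeland f κ' hκ' z hz fun y hy => by
    have := hz2 ⟨y, mem_closedBall_zero_iff.2 hy⟩
    rwa [norm_sub_rev] at this
  have hpos : 0 < ‖f - g‖ := by
    have := norm_sub_norm_le f g
    linarith
  have h0 : 0 ≤ (f - g) z := by simpa using hgm 0 (by simp)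
  have hle : ‖f - g‖ ≤ (f - g) z := by
    refine ContinuousLinearMap.opNorm_le_of_unit_norm h0 fun y hy => ?_
    rw [Real.norm_eq_abs, abs_le']
    refine ⟨hgm y hy.le, ?_⟩
    rw [← map_neg]
    exact hgm (-y) (by simp [hy])
  have hub : (f - g) z ≤ ‖f - g‖ * ‖z‖ :=
    (le_abs_self _).trans ((f - g).le_opNorm z)
  refine ⟨f - g, z, hpos, ?_, ?_, ?_, ?_⟩
  · refine le_antisymm hz ?_
    by_contra! h
    nlinarith
  · refine le_antisymm ?_ hle
    nlinarith
  · rw [lt_div_iff₀ hκ]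
    rw [div_lt_iff₀ hδ] at h1
    have h3 := hbd z hz
    have h4 : κ' * ‖x - z‖ ≤ ‖f‖ - f x := by linarith
    have h5 : κ' * (‖x - z‖ * κ) < κ' * δ := by nlinarith
    exact lt_of_mul_lt_mul_left h5 hκ'.le
  · rw [sub_sub_cancel]
    linarith

theorem bpb_lemma_part_two
    (X : Type*) [NormedAddCommGroup X] [NormedSpace ℝ X] [CompleteSpace X]
    (ε : ℝ) (hε : ε ∈ Set.Ioo (0 : ℝ) 1)
    (x : X) (hx : ‖x‖ ≤ 1)
    (xs : X →L[ℝ] ℝ) (hxs : ‖xs‖ ≤ 1) (hxsx : 1 - ε < xs x)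
    (k : ℝ) (hk : k ∈ Set.Ico (ε / 2) 1) :
    ∃ (zs : X →L[ℝ] ℝ) (z : X), ‖zs‖ = 1 ∧ ‖z‖ = 1 ∧ zs z = 1 ∧
      ‖x - z‖ < ε / k ∧ ‖xs - zs‖ < 2 * k := by
  obtain ⟨hε0, hε1⟩ := hε
  obtain ⟨hk0, hk1⟩ := hk
  have hkpos : 0 < k := by linarith
  have hxle : xs x ≤ ‖xs‖ := (le_abs_self _).trans (xs.unit_le_opNorm x hx)
  obtain ⟨δ, hδ⟩ : ∃ δ, δ = ‖xs‖ - (1 - ε) := ⟨_, rfl⟩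
  have hδ0 : 0 < δ := by linarith
  obtain ⟨κ, hκ⟩ : ∃ κ, κ = k * δ / ε := ⟨_, rfl⟩
  have hκ0 : 0 < κ := by rw [hκ]; positivity
  have hκf : κ < ‖xs‖ := by
    rw [hκ, div_lt_iff₀ hε0]
    -- `k * δ < δ ≤ ‖xs‖ * ε`, the last step being `(1 - ‖xs‖) * (1 - ε) ≥ 0`.
    have h1 : k * δ < δ := by nlinarith
    have h2 := mul_nonneg (sub_nonneg.2 hxs) (sub_nonneg.2 hε1.le)
    nlinarith
  obtain ⟨y', z, hy, hz, hyz, hxz, hfy⟩ :=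
    exists_support_near xs x hx δ κ hκ0 hκf (by linarith)
  refine ⟨‖y'‖⁻¹ • y', z, ?_, hz, ?_, ?_, ?_⟩
  · rw [norm_smul, norm_inv, norm_norm, inv_mul_cancel₀ hy.ne']
  · rw [smul_apply, hyz, smul_eq_mul, inv_mul_cancel₀ hy.ne']
  · have : δ / κ = ε / k := by
      rw [hκ]
      field_simp
    rwa [← this]
  · have hnorm : ‖y' - ‖y'‖⁻¹ • y'‖ = |‖y'‖ - 1| := by
      have : y' - ‖y'‖⁻¹ • y' = (1 - ‖y'‖⁻¹) • y' := by module
      rw [this, norm_smul, Real.norm_eq_abs]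
      nth_rewrite 2 [← abs_of_pos hy]
      rw [← abs_mul, sub_mul, inv_mul_cancel₀ hy.ne', one_mul]
    have h1 : |‖y'‖ - 1| < κ + (1 - ‖xs‖) := by
      have h2 := abs_norm_sub_norm_le xs y'
      rw [abs_le] at h2
      rw [abs_lt]
      constructor <;> linarith
    have h3 : 2 * κ + (1 - ‖xs‖) ≤ 2 * k := by
      have h4 : κ = k - k * (1 - ‖xs‖) / ε := by
        rw [hκ, hδ]
        field_simp
        ring
      have h5 : 1 - ‖xs‖ ≤ 2 * (k * (1 - ‖xs‖) / ε) := by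
        rw [← mul_div_assoc, le_div_iff₀ hε0]
        nlinarith
      linarith
    calc ‖xs - ‖y'‖⁻¹ • y'‖ ≤ ‖xs - y'‖ + ‖y' - ‖y'‖⁻¹ • y'‖ := norm_sub_le_norm_sub_add_norm_sub ..
      _ < κ + (κ + (1 - ‖xs‖)) := by rw [hnorm]; linarith
      _ ≤ 2 * k := by linarith
end

section
/- Let X be a real Banach space whose parameter of uniform non-squareness satisfies α(X) > α₀ for some α₀ ∈ (0,1]. Then for every ε ∈ (0,1), every x ∈ X with ‖x‖ = 1 and every continuous linear functional x* on X with ‖x*‖ ≤ 1 and x*(x) > 1 − ε, and for every k with ε/(2(1 − α₀/3)) ≤ k ≤ 1/2, there exist y ∈ X with ‖y‖ = 1 and a continuous linear functional y* on X with ‖y*‖ = 1 and y*(y) = 1 such that ‖x − y‖ < ε/k and ‖x* − y*‖ < 2k(1 − α₀/3). -/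
/-!
A quantitative Bishop–Phelps–Bollobás argument, with two ingredients.

* Ekeland's principle for `xs` on the unit ball, followed by a Hahn–Banach separation, perturbs `xs`
  by at most `κ` to a functional `η` attaining its norm at a point `y` of the ball, where
  `κ * ‖x - y‖ ≤ ‖xs‖ - xs x` (`exists_normAttaining_near`).
* Replacing `η` by `η / ‖η‖` costs at most another `κ` in general. The quantity
  `sup (‖x + y‖ + ‖x - y‖)` over the unit balls does not increase on passing to the dual
  (`dual_nonsquare`), because `(f + g) x + (f - g) y = f (x + y) + g (x - y)`. Applied to
  `(p - η) / κ` and one of `p`, `η / ‖η‖`, where `‖p‖ = 1`, this bound says that the two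
  perturbations cannot nearly add up in norm, so the total is at most `2 * κ * (1 - α₀ / 3)`
  (`norm_sub_normalize_le`).

A functional `xs` of norm `r < 1` is compared with `xs / r`. The loss `1 - r` in the norm is
compensated by the smaller defect `r - xs x` available to Ekeland's principle; this trade is
favourable because `ε ≤ 2 * k * (1 - α₀ / 3)`.
-/

noncomputable section

/-- The parameter of uniform non-squareness
`α(X) = 2 - sup { (‖x+y‖ + ‖x-y‖)/2 : x, y ∈ B_X }`. -/
def unifNonSqParam (X : Type*) [NormedAddCommGroup X] [NormedSpace ℝ X] : ℝ :=
  2 - sSup {t : ℝ | ∃ x y : X, ‖x‖ ≤ 1 ∧ ‖y‖ ≤ 1 ∧ t = (‖x + y‖ + ‖x - y‖) / 2}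

/-! ### Ekeland's variational principle -/

/-- Ekeland's variational principle, in the form for maximizing a continuous function that is
bounded above on a closed set. -/
lemma exists_ekeland_s3 {X : Type*} [MetricSpace X] [CompleteSpace X] {S : Set X} (hS : IsClosed S)
    {φ : X → ℝ} (hφ : Continuous φ) {M : ℝ} (hM : ∀ z ∈ S, φ z ≤ M) {k : ℝ} (hk : 0 < k)
    {x : X} (hx : x ∈ S) :
    ∃ y ∈ S, k * dist x y ≤ φ y - φ x ∧ ∀ z ∈ S, φ z - φ y ≤ k * dist y z := by
  -- From `a`, move to a point dominating `a` whose value is almost the best among such points.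
  have step : ∀ (n : ℕ) (a : S), ∃ b : S, k * dist a.1 b.1 ≤ φ b - φ a ∧
      ∀ w ∈ S, k * dist a.1 w ≤ φ w - φ a → φ w ≤ φ b + 1 / ((n : ℝ) + 1) := by
    intro n a
    have hne : (φ '' {w | w ∈ S ∧ k * dist a.1 w ≤ φ w - φ a}).Nonempty :=
      ⟨φ a, a.1, ⟨a.2, by simp⟩, rfl⟩
    have hbd : BddAbove (φ '' {w | w ∈ S ∧ k * dist a.1 w ≤ φ w - φ a}) :=
      ⟨M, by rintro _ ⟨w, hw, rfl⟩; exact hM w hw.1⟩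
    have hpos : (0 : ℝ) < 1 / ((n : ℝ) + 1) := Nat.one_div_pos_of_nat
    obtain ⟨_, ⟨b, hb, rfl⟩, hlt⟩ := exists_lt_of_lt_csSup hne (sub_lt_self _ hpos)
    refine ⟨⟨b, hb.1⟩, hb.2, fun w hw hw' => ?_⟩
    have := le_csSup hbd ⟨w, ⟨hw, hw'⟩, rfl⟩
    simp only
    linarith
  choose g hg1 hg2 using step
  let u : ℕ → S := fun n => Nat.rec ⟨x, hx⟩ (fun n a => g n a) n
  have hu1 : ∀ n, k * dist (u n).1 (u (n + 1)).1 ≤ φ (u (n + 1)).1 - φ (u n).1 :=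
    fun n => hg1 n (u n)
  have hu2 : ∀ n, ∀ w ∈ S, k * dist (u n).1 w ≤ φ w - φ (u n).1 →
      φ w ≤ φ (u (n + 1)).1 + 1 / ((n : ℝ) + 1) := fun n => hg2 n (u n)
  have hle : ∀ n m, n ≤ m → k * dist (u n).1 (u m).1 ≤ φ (u m).1 - φ (u n).1 := by
    intro n m hnm
    induction m, hnm using Nat.le_induction with
    | base => simp
    | succ m _ ih =>
      have h1 := hu1 m
      have h2 := mul_le_mul_of_nonneg_left (dist_triangle (u n).1 (u m).1 (u (m + 1)).1) hk.le
      linarith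
  have hmono : Monotone fun n => φ (u n).1 := fun n m hnm => by
    have h1 := hle n m hnm
    have h2 : 0 ≤ k * dist (u n).1 (u m).1 := by positivity
    simp only
    linarith
  have hbdd : BddAbove (Set.range fun n => φ (u n).1) :=
    ⟨M, by rintro _ ⟨n, rfl⟩; exact hM _ (u n).2⟩
  have hL := tendsto_atTop_ciSup hmono hbdd
  set L := ⨆ n, φ (u n).1
  have hleL : ∀ n, φ (u n).1 ≤ L := fun n => le_ciSup hbdd n
  have hcau : CauchySeq fun n => (u n).1 := by
    refine cauchySeq_of_le_tendsto_0' (fun n => (L - φ (u n).1) / k) (fun n m hnm => ?_) ?_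
    · rw [le_div_iff₀ hk]
      have := hle n m hnm
      have := hleL m
      linarith
    · simpa using (hL.const_sub L).div_const k
  obtain ⟨y, hy⟩ := cauchySeq_tendsto_of_complete hcau
  have hφy : Filter.Tendsto (fun n => φ (u n).1) Filter.atTop (nhds (φ y)) :=
    (hφ.tendsto y).comp hy
  have hdom : ∀ n, k * dist (u n).1 y ≤ φ y - φ (u n).1 := fun n =>
    le_of_tendsto_of_tendsto ((tendsto_const_nhds.dist hy).const_mul k) (hφy.sub_const _)
      (Filter.eventually_atTop.2 ⟨n, fun m hm => hle n m hm⟩)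
  have hyS : y ∈ S := hS.mem_of_tendsto hy (Filter.Eventually.of_forall fun n => (u n).2)
  refine ⟨y, hyS, hdom 0, fun z hz => ?_⟩
  by_contra! hlt
  have hzy : φ z ≤ φ y := by
    have hlim : Filter.Tendsto (fun n : ℕ => φ y + 1 / ((n : ℝ) + 1)) Filter.atTop
        (nhds (φ y)) := by
      simpa using tendsto_one_div_add_atTop_nhds_zero_nat.const_add (φ y)
    refine ge_of_tendsto' hlim fun n => ?_
    have h1 := hu2 n z hz (by
      have h2 := mul_le_mul_of_nonneg_left (dist_triangle (u n).1 y z) hk.le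
      have := hdom n
      linarith)
    have h3 := hdom (n + 1)
    have h4 : 0 ≤ k * dist (u (n + 1)).1 y := by positivity
    linarith
  have : 0 ≤ k * dist y z := by positivity
  linarith

/-! ### Functionals on the unit ball and duality -/

lemma opNorm_le_of_le_on_ball {X : Type*} [NormedAddCommGroup X] [NormedSpace ℝ X]
    {f : X →L[ℝ] ℝ} {c : ℝ} (h : ∀ x, ‖x‖ ≤ 1 → f x ≤ c) : ‖f‖ ≤ c := by
  have hc : 0 ≤ c := by simpa using h 0 (by simp)
  refine ContinuousLinearMap.opNorm_le_of_unit_norm hc fun x hx => ?_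
  rw [Real.norm_eq_abs, abs_le]
  have h1 := h x hx.le
  have h2 := h (-x) (by rw [norm_neg]; exact hx.le)
  rw [map_neg] at h2
  constructor <;> linarith

lemma apply_le_opNorm {X : Type*} [NormedAddCommGroup X] [NormedSpace ℝ X]
    (f : X →L[ℝ] ℝ) {x : X} (hx : ‖x‖ ≤ 1) : f x ≤ ‖f‖ :=
  (Real.le_norm_self _).trans (f.unit_le_opNorm x hx)

/-- The nonsquareness bound passes to the dual. -/
lemma dual_nonsquare {X : Type*} [NormedAddCommGroup X] [NormedSpace ℝ X] {C : ℝ}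
    (hC : ∀ x y : X, ‖x‖ ≤ 1 → ‖y‖ ≤ 1 → ‖x + y‖ + ‖x - y‖ ≤ C)
    {f g : X →L[ℝ] ℝ} (hf : ‖f‖ ≤ 1) (hg : ‖g‖ ≤ 1) : ‖f + g‖ + ‖f - g‖ ≤ C := by
  have key : ∀ x y : X, ‖x‖ ≤ 1 → ‖y‖ ≤ 1 → (f + g) x + (f - g) y ≤ C := by
    intro x y hx hy
    have h1 : f (x + y) ≤ ‖x + y‖ :=
      (Real.le_norm_self _).trans (by simpa using f.le_of_opNorm_le hf (x + y))
    have h2 : g (x - y) ≤ ‖x - y‖ :=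
      (Real.le_norm_self _).trans (by simpa using g.le_of_opNorm_le hg (x - y))
    have h3 := hC x y hx hy
    simp only [map_add, map_sub] at h1 h2
    simp only [add_apply, sub_apply]
    linarith
  have h1 : ‖f - g‖ ≤ C - ‖f + g‖ := by
    refine opNorm_le_of_le_on_ball fun y hy => ?_
    have h2 : ‖f + g‖ ≤ C - (f - g) y :=
      opNorm_le_of_le_on_ball fun x hx => by linarith [key x y hx hy]
    linarith
  linarith

/-! ### Perturbation to a norm-attaining functional -/

/-- Bishop–Phelps perturbation: `p` is moved by at most `k` to a functional attaining its norm, at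
a point whose distance to `x` is controlled by the defect `‖p‖ - p x`. -/
lemma exists_normAttaining_near {X : Type*} [NormedAddCommGroup X] [NormedSpace ℝ X]
    [CompleteSpace X] (p : X →L[ℝ] ℝ) {x : X} (hx : ‖x‖ ≤ 1) {k : ℝ} (hk : 0 < k) :
    ∃ (y : X) (η : X →L[ℝ] ℝ), ‖y‖ ≤ 1 ∧ η y = ‖η‖ ∧ k * ‖x - y‖ ≤ ‖p‖ - p x ∧
      ‖p - η‖ ≤ k := by
  obtain ⟨y, hy, hxy, hmax⟩ := exists_ekeland_s3 (Metric.isClosed_closedBall (x := (0 : X)) (ε := 1))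
    p.continuous (M := ‖p‖) (fun z hz => apply_le_opNorm p (by simpa using hz)) hk
    (x := x) (by simpa using hx)
  have hy1 : ‖y‖ ≤ 1 := by simpa using hy
  -- Separate the strict epigraph of `k * ‖· - y‖` from the hypograph of `p - p y` on the ball.
  have hconvA : Convex ℝ {q : X × ℝ | k * ‖q.1 - y‖ < q.2} := by
    have h := (((convexOn_norm (convex_univ (𝕜 := ℝ) (E := X))).translate_left (-y)).smul
      hk.le).convex_strict_epigraph
    simpa [sub_eq_add_neg, add_comm] using h
  have hopenA : IsOpen {q : X × ℝ | k * ‖q.1 - y‖ < q.2} :=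
    isOpen_lt (by fun_prop) (by fun_prop)
  have hconvB : Convex ℝ {q : X × ℝ | ‖q.1‖ ≤ 1 ∧ q.2 ≤ p q.1 - p y} := by
    rintro ⟨a, s⟩ ⟨ha, hs⟩ ⟨b, t⟩ ⟨hb, ht⟩ c d hc hd hcd
    simp only at ha hs hb ht
    refine ⟨?_, ?_⟩
    · have := convex_closedBall (0 : X) (1 : ℝ) (by simpa using ha) (by simpa using hb) hc hd hcd
      simpa using this
    · simp only [Prod.smul_mk, Prod.mk_add_mk, map_add, map_smul, smul_eq_mul]
      have hd' : d = 1 - c := by linarith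
      have h1 := mul_le_mul_of_nonneg_left hs hc
      have h2 := mul_le_mul_of_nonneg_left ht hd
      subst hd'
      linarith
  have hdisj : Disjoint {q : X × ℝ | k * ‖q.1 - y‖ < q.2}
      {q : X × ℝ | ‖q.1‖ ≤ 1 ∧ q.2 ≤ p q.1 - p y} := by
    rw [Set.disjoint_left]
    rintro ⟨a, s⟩ h1 ⟨h2, h3⟩
    simp only [Set.mem_ofPred_eq] at h1 h2 h3
    have := hmax a (by simpa using h2)
    rw [dist_comm, dist_eq_norm] at this
    linarith
  obtain ⟨F, u, hFA, hFB⟩ := geometric_hahn_banach_open hconvA hopenA hconvB hdisj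
  set g : X →L[ℝ] ℝ := F.comp (ContinuousLinearMap.inl ℝ X ℝ) with hg
  set c : ℝ := F (0, 1) with hc
  have hF : ∀ a t, F (a, t) = g a + c * t := by
    intro a t
    have : ((a, t) : X × ℝ) = (a, 0) + t • (0, 1) := by simp
    rw [this, map_add, map_smul, smul_eq_mul, mul_comm]
    rfl
  have hA : ∀ a t, k * ‖a - y‖ < t → g a + c * t < u := fun a t h => by
    rw [← hF]; exact hFA (a, t) h
  have hB : ∀ a t, ‖a‖ ≤ 1 → t ≤ p a - p y → u ≤ g a + c * t := fun a t h h' => by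
    rw [← hF]; exact hFB (a, t) ⟨h, h'⟩
  have huy : u ≤ g y := by simpa using hB y 0 hy1 (by simp)
  have hcneg : c < 0 := by
    have := hA y 1 (by simp)
    linarith
  have hA' : ∀ a, g a + c * (k * ‖a - y‖) ≤ u := by
    intro a
    have hlim : Filter.Tendsto (fun t => g a + c * t)
        (nhdsWithin (k * ‖a - y‖) (Set.Ioi (k * ‖a - y‖)))
        (nhds (g a + c * (k * ‖a - y‖))) :=
      (Continuous.tendsto (by fun_prop) _).mono_left nhdsWithin_le_nhds
    refine le_of_tendsto hlim ?_
    filter_upwards [self_mem_nhdsWithin] with t ht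
    exact (hA a t ht).le
  -- Dividing by `-c` normalizes the vertical component of the separating functional to `-1`.
  set G : X →L[ℝ] ℝ := (-c)⁻¹ • g with hG
  have hGg : ∀ a, g a = -c * G a := fun a => by
    have : -c ≠ 0 := by linarith
    simp only [hG, smul_apply, smul_eq_mul]
    rw [mul_inv_cancel_left₀ this]
  have hnG : ‖G‖ ≤ k := by
    refine opNorm_le_of_le_on_ball fun a ha => ?_
    have h1 := hA' (y + a)
    rw [add_sub_cancel_left, map_add] at h1
    have h2 : -c * G a ≤ -c * (k * ‖a‖) := by rw [← hGg]; linarith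
    have h3 := le_of_mul_le_mul_left h2 (by linarith)
    nlinarith
  have hatt : ‖p - G‖ ≤ (p - G) y := by
    refine opNorm_le_of_le_on_ball fun a ha => ?_
    have h1 := hB a _ ha le_rfl
    have h2 := hA' y
    simp only [sub_self, norm_zero, mul_zero, add_zero] at h2
    have h3 : -c * (p a - p y) ≤ -c * (G a - G y) := by
      rw [mul_sub (-c) (G a), ← hGg, ← hGg]; linarith
    have h4 := le_of_mul_le_mul_left h3 (by linarith)
    simp only [sub_apply]
    linarith
  refine ⟨y, p - G, hy1, le_antisymm (apply_le_opNorm _ hy1) hatt, ?_, by simpa using hnG⟩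
  rw [dist_eq_norm] at hxy
  have := apply_le_opNorm p hy1
  linarith

/-! ### The cost of normalization -/

/-- A lower bound on `‖f - q‖` leaves, by nonsquareness, little room for `‖f + q‖`, and so
improves the estimate `‖κ • f + t • q‖ ≤ 2 * κ` that holds for all `f`, `q` in the unit ball. -/
lemma norm_combination_le {E : Type*} [NormedAddCommGroup E] [NormedSpace ℝ E] {f q : E}
    {α κ t : ℝ} (hα : 0 ≤ α) (hα1 : α ≤ 1) (hκ : 0 < κ) (ht : 0 ≤ t) (htκ : t ≤ κ)
    (hf : ‖f‖ ≤ 1) (hsum : ‖f + q‖ + ‖f - q‖ ≤ 4 - 2 * α) (hlow : κ + t ≤ κ * ‖f - q‖) :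
    ‖κ • f + t • q‖ ≤ 2 * κ * (1 - α / 3) := by
  have h1 : ‖κ • f + t • q‖ ≤ (κ - t) + t * ‖f + q‖ := by
    have : κ • f + t • q = (κ - t) • f + t • (f + q) := by module
    rw [this]
    refine (norm_add_le _ _).trans ?_
    rw [norm_smul, norm_smul, Real.norm_of_nonneg ht, Real.norm_of_nonneg (by linarith)]
    have := mul_le_mul_of_nonneg_left hf (show 0 ≤ κ - t by linarith)
    linarith
  -- With `s = t / κ`, the bound becomes `1 - s + s * (3 - 2 * α - s) ≤ 2 - 2 * α + α ^ 2`.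
  have h2 : κ * ‖f + q‖ ≤ κ * (3 - 2 * α) - t := by nlinarith
  have h3 : κ * ‖κ • f + t • q‖ ≤ κ * (2 * κ * (1 - α / 3)) := by
    have h4 := mul_le_mul_of_nonneg_left h1 hκ.le
    have h5 := mul_le_mul_of_nonneg_left h2 ht
    have h6 : 0 ≤ κ ^ 2 * (α * (4 / 3 - α)) := by
      have : 0 ≤ 4 / 3 - α := by linarith
      positivity
    nlinarith [sq_nonneg (t - κ * (1 - α))]
  exact le_of_mul_le_mul_left h3 hκ

/-- Normalizing a perturbation of size `κ` of a norm-one vector displaces it, in total, by at most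
`2 * κ * (1 - α / 3)` if the space satisfies the nonsquareness bound with parameter `α`. -/
lemma norm_sub_normalize_le {E : Type*} [NormedAddCommGroup E] [NormedSpace ℝ E] {α κ : ℝ}
    (hα : 0 ≤ α) (hα1 : α ≤ 1)
    (hE : ∀ f g : E, ‖f‖ ≤ 1 → ‖g‖ ≤ 1 → ‖f + g‖ + ‖f - g‖ ≤ 4 - 2 * α)
    (hκ : 0 < κ) (hκ2 : κ ≤ 1 / 2) {p η : E} (hp : ‖p‖ = 1) (hpη : ‖p - η‖ ≤ κ) :
    ‖p - ‖η‖⁻¹ • η‖ ≤ 2 * κ * (1 - α / 3) := by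
  have hh1 : 1 - κ ≤ ‖η‖ := by
    have := norm_sub_norm_le p η
    linarith
  have hh2 : ‖η‖ ≤ 1 + κ := by
    have := norm_sub_norm_le η p
    rw [norm_sub_rev] at this
    linarith
  set h := ‖η‖ with hh
  have hh0 : 0 < h := by linarith
  set f : E := κ⁻¹ • (p - η) with hf
  set q : E := h⁻¹ • η with hq
  have hκf : κ • f = p - η := by rw [hf, smul_inv_smul₀ hκ.ne']
  have hhq : h • q = η := by rw [hq, smul_inv_smul₀ hh0.ne']
  have hf1 : ‖f‖ ≤ 1 := by
    rw [hf, norm_smul, Real.norm_of_nonneg (by positivity), inv_mul_le_iff₀ hκ]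
    linarith
  have hq1 : ‖q‖ = 1 := by
    rw [hq, norm_smul, Real.norm_of_nonneg (by positivity), ← hh, inv_mul_cancel₀ hh0.ne']
  rcases le_total h 1 with hle | hge
  · have hlow : κ + (1 - h) ≤ κ * ‖f - -q‖ := by
      -- `h ≥ κ`, which holds because `κ ≤ 1 / 2`, makes `p` a nonnegative combination.
      have e : p = κ • (f - -q) + (h - κ) • q := by
        have : κ • (f - -q) + (h - κ) • q = κ • f + h • q := by module
        rw [this, hκf, hhq]; abel
      have h1 : ‖p‖ ≤ κ * ‖f - -q‖ + (h - κ) := by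
        conv_lhs => rw [e]
        refine (norm_add_le _ _).trans ?_
        rw [norm_smul, norm_smul, hq1, Real.norm_of_nonneg hκ.le,
          Real.norm_of_nonneg (by linarith), mul_one]
      linarith
    have := norm_combination_le hα hα1 hκ (t := 1 - h) (by linarith) (by linarith) hf1
      (hE f (-q) hf1 (by rw [norm_neg, hq1])) hlow
    have e : p - q = κ • f + (1 - h) • (-q) := by
      have : κ • f + (1 - h) • (-q) = κ • f + h • q - q := by module
      rw [this, hκf, hhq]; abel
    rwa [e]
  · have hlow : κ + (h - 1) ≤ κ * ‖f - p‖ := by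
      have e : η = -(κ • (f - p)) + (1 - κ) • p := by
        have : -(κ • (f - p)) + (1 - κ) • p = p - κ • f := by module
        rw [this, hκf]; abel
      have h1 : ‖η‖ ≤ κ * ‖f - p‖ + (1 - κ) := by
        conv_lhs => rw [e]
        refine (norm_add_le _ _).trans ?_
        rw [norm_neg, norm_smul, norm_smul, hp, Real.norm_of_nonneg hκ.le,
          Real.norm_of_nonneg (by linarith), mul_one]
      linarith
    have h2 := norm_combination_le hα hα1 hκ (t := h - 1) (by linarith) (by linarith) hf1
      (hE f p hf1 hp.le) hlow
    have e : h • (p - q) = κ • f + (h - 1) • p := by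
      rw [smul_sub, hhq, hκf]; module
    have h3 : h * ‖p - q‖ ≤ 2 * κ * (1 - α / 3) := by
      rw [← e, norm_smul, Real.norm_of_nonneg hh0.le] at h2
      exact h2
    nlinarith [norm_nonneg (p - q)]

/-! ### The estimate for uniformly non-square spaces -/

lemma norm_add_norm_sub_le_of_lt_param {X : Type*} [NormedAddCommGroup X] [NormedSpace ℝ X]
    {α : ℝ} (h : α < unifNonSqParam X) {x y : X} (hx : ‖x‖ ≤ 1) (hy : ‖y‖ ≤ 1) :
    ‖x + y‖ + ‖x - y‖ ≤ 4 - 2 * α := by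
  have hbd : BddAbove {t : ℝ | ∃ x y : X, ‖x‖ ≤ 1 ∧ ‖y‖ ≤ 1 ∧
      t = (‖x + y‖ + ‖x - y‖) / 2} := by
    refine ⟨2, ?_⟩
    rintro _ ⟨a, b, ha, hb, rfl⟩
    have := norm_add_le a b
    have := norm_sub_le a b
    linarith
  have h1 := le_csSup hbd ⟨x, y, hx, hy, rfl⟩
  unfold unifNonSqParam at h
  linarith

theorem bpb_lemma_nonsquare
    (X : Type*) [NormedAddCommGroup X] [NormedSpace ℝ X] [CompleteSpace X]
    (α₀ : ℝ) (hα₀ : α₀ ∈ Set.Ioc (0 : ℝ) 1) (hX : α₀ < unifNonSqParam X)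
    (ε : ℝ) (hε : ε ∈ Set.Ioo (0 : ℝ) 1)
    (x : X) (hx : ‖x‖ = 1)
    (xs : X →L[ℝ] ℝ) (hxs : ‖xs‖ ≤ 1) (hxsx : 1 - ε < xs x)
    (k : ℝ) (hk1 : ε / (2 * (1 - α₀ / 3)) ≤ k) (hk2 : k ≤ 1 / 2) :
    ∃ (y : X) (ys : X →L[ℝ] ℝ), ‖y‖ = 1 ∧ ‖ys‖ = 1 ∧ ys y = 1 ∧
      ‖x - y‖ < ε / k ∧ ‖xs - ys‖ < 2 * k * (1 - α₀ / 3) := by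
  obtain ⟨hα0, hα1⟩ := hα₀
  obtain ⟨hε0, hε1⟩ := hε
  have hE : ∀ f g : X →L[ℝ] ℝ, ‖f‖ ≤ 1 → ‖g‖ ≤ 1 → ‖f + g‖ + ‖f - g‖ ≤ 4 - 2 * α₀ :=
    fun f g hf hg => dual_nonsquare
      (fun x y hx hy => norm_add_norm_sub_le_of_lt_param hX hx hy) hf hg
  have hβ : 0 < 1 - α₀ / 3 := by linarith
  have hεK : ε ≤ 2 * k * (1 - α₀ / 3) := by
    rw [div_le_iff₀ (by positivity)] at hk1
    linarith
  have hk0 : 0 < k := lt_of_lt_of_le (by positivity) hk1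
  have hxr : xs x ≤ ‖xs‖ := apply_le_opNorm xs hx.le
  set r := ‖xs‖ with hr
  have hr0 : 0 < r := by linarith
  -- The parameter `κ` is small compared with `k * (ε - (1 - r)) / ε`, to absorb the loss `1 - r`,
  -- and large compared with `k * (r - xs x) / ε`, to keep `y` within `ε / k` of `x`.
  obtain ⟨κ, hκ1, hκ2⟩ := exists_between
    (show k * (r - xs x) / ε < k * (ε - (1 - r)) / ε from
      div_lt_div_of_pos_right (mul_lt_mul_of_pos_left (by linarith) hk0) hε0)
  have hκ0 : 0 < κ := lt_of_le_of_lt (div_nonneg (mul_nonneg hk0.le (by linarith)) hε0.le) hκ1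
  rw [div_lt_iff₀ hε0] at hκ1
  rw [lt_div_iff₀ hε0] at hκ2
  obtain ⟨y, η, hy, hηy, hxy, hη⟩ := exists_normAttaining_near xs hx.le hκ0
  have hκr : κ / r ≤ 1 / 2 := by
    rw [div_le_iff₀ hr0]
    -- `ε - (1 - r) ≤ ε * r`, since `ε ≤ 1` and `r ≤ 1`.
    have h1 : ε - (1 - r) ≤ ε * r := by nlinarith
    have h2 : κ * ε ≤ (1 / 2 * r) * ε := by nlinarith
    exact le_of_mul_le_mul_right h2 hε0
  have hp : ‖r⁻¹ • xs‖ = 1 := by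
    rw [norm_smul, Real.norm_of_nonneg (by positivity), ← hr, inv_mul_cancel₀ hr0.ne']
  have hpη : ‖r⁻¹ • xs - r⁻¹ • η‖ ≤ κ / r := by
    have e : r⁻¹ • xs - r⁻¹ • η = r⁻¹ • (xs - η) := by module
    rw [e, norm_smul, Real.norm_of_nonneg (by positivity), div_eq_inv_mul]
    gcongr
  have hmain := norm_sub_normalize_le hα0.le hα1 hE (by positivity) hκr hp hpη
  have hη0 : 0 < ‖η‖ := by
    have h1 := norm_sub_norm_le xs η
    have h2 : κ ≤ 1 / 2 * r := by rwa [div_le_iff₀ hr0] at hκr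
    linarith
  have hnorm : ‖r⁻¹ • η‖⁻¹ • r⁻¹ • η = ‖η‖⁻¹ • η := by
    rw [norm_smul, Real.norm_of_nonneg (by positivity), smul_smul]
    congr 1
    field_simp
  rw [hnorm] at hmain
  set ys : X →L[ℝ] ℝ := ‖η‖⁻¹ • η with hys
  have hys1 : ‖ys‖ = 1 := by
    rw [hys, norm_smul, norm_inv, norm_norm, inv_mul_cancel₀ hη0.ne']
  have hysy : ys y = 1 := by
    rw [hys, smul_apply, smul_eq_mul, hηy, inv_mul_cancel₀ hη0.ne']
  refine ⟨y, ys, le_antisymm hy ?_, hys1, hysy, ?_, ?_⟩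
  · have := ys.le_opNorm y
    rwa [hysy, hys1, norm_one, one_mul] at this
  · rw [lt_div_iff₀ hk0]
    have h1 : κ * (‖x - y‖ * k) < κ * ε := by nlinarith
    exact lt_of_mul_lt_mul_left h1 hκ0.le
  · have e : xs - ys = r • (r⁻¹ • xs - ys) + (-(1 - r)) • ys := by
      rw [smul_sub, smul_inv_smul₀ hr0.ne']; module
    have h1 : ‖xs - ys‖ ≤ r * ‖r⁻¹ • xs - ys‖ + (1 - r) := by
      rw [e]
      refine (norm_add_le _ _).trans ?_
      rw [norm_smul, norm_smul, hys1, norm_neg, Real.norm_of_nonneg hr0.le,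
        Real.norm_of_nonneg (by linarith), mul_one]
    have h2 : r * ‖r⁻¹ • xs - ys‖ ≤ 2 * κ * (1 - α₀ / 3) := by
      have := mul_le_mul_of_nonneg_left hmain hr0.le
      have e2 : r * (2 * (κ / r) * (1 - α₀ / 3)) = 2 * κ * (1 - α₀ / 3) := by field_simp
      linarith
    have h3 : ε * (2 * κ * (1 - α₀ / 3) + (1 - r)) < ε * (2 * k * (1 - α₀ / 3)) := by
      have h4 := mul_lt_mul_of_pos_right hκ2 (show 0 < 2 * (1 - α₀ / 3) by positivity)
      have h5 := mul_le_mul_of_nonneg_right hεK (show 0 ≤ 1 - r by linarith)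
      linarith
    have h4 := lt_of_mul_lt_mul_left h3 hε0.le
    linarith
end
end

section
/- Let Y be a nontrivial real Banach space with property β with parameter ρ ∈ [0,1). Then for every ε ∈ (0,1), Φ^S(ℓ₁⁽²⁾, Y, ε) ≤ Φ(ℓ₁⁽²⁾, Y, ε) ≤ min{ √(2ε)·(1+ρ) / ( √(1 − ρ² + (ε/2)ρ²) + ρ√(ε/2) ), 1 }. -/
/-!
Write `T` through its two columns `u = T e₀`, `v = T e₁`, choose a functional `φ = ± y*_α` with
`φ (T x) > 1 - ε`, and absorb the signs of the coordinates of `x` into the columns. Then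
`a s + b t > 1 - ε` with `a = |x₀|`, `b = |x₁|`, `s = φ u`, `t = φ v`. Three corrections compete.

* Move `x` to the vertex `± e₀` and normalise `u`, leaving `v` alone
  (`exists_norm_one_near`): the cost is at most `max (1 - a + b) (1 - s)`.
* The same with the roles of the two coordinates exchanged.
* Normalise `x` and move both columns into the face `{φ = 1}` of the unit ball
  (`exists_face_near`, the only place where the vectors `y_α` and `ρ` enter): moving `u` costs at most
  `(1 - s) (1 + ρ) / (1 - ρ s)`.

The bound `D` of the theorem is the positive root of `D² (1 - ρ) + 2 ε ρ D = 2 ε (1 + ρ)`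
(`bound_quadratic`). Put `τ = D (1 - ρ) / (1 + ρ - ρ D)`, so that `2 ε = D τ` and a column with
`1 - s < τ` can be moved into the face at cost less than `D`. An elementary argument with
`a + b ≤ 1` then shows that for `D ≤ 1` one of the corrections always costs less than `D`
(`scalar_cases`). The bound `1` only needs the first two corrections, used according to which
coordinate of `x` is larger.
-/


noncomputable section

/-- The two-dimensional real `ℓ₁` space. -/
abbrev L12 : Type := PiLp 1 (fun _ : Fin 2 => ℝ)

/-! ### Operators on the two-dimensional `ℓ₁` space -/

/-- Approximability of `(x, T)` within `δ`: the conclusion in the definition of the moduli. -/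
def Approximable {Y : Type*} [NormedAddCommGroup Y] [NormedSpace ℝ Y]
    (x : L12) (T : L12 →L[ℝ] Y) (δ : ℝ) : Prop :=
  ∃ (z : L12) (F : L12 →L[ℝ] Y), ‖z‖ = 1 ∧ ‖F‖ = 1 ∧ ‖F z‖ = 1 ∧ ‖x - z‖ < δ ∧ ‖T - F‖ < δ

lemma L12_norm (x : L12) : ‖x‖ = |x 0| + |x 1| := by
  rw [PiLp.norm_eq_of_nat 1 (by simp)]
  simp [Fin.sum_univ_two]

/-- The operator with columns `p`, `q`. -/
def colOp {Y : Type*} [NormedAddCommGroup Y] [NormedSpace ℝ Y] (p q : Y) : L12 →L[ℝ] Y :=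
  (PiLp.proj (𝕜 := ℝ) 1 (fun _ : Fin 2 => ℝ) 0).smulRight p +
    (PiLp.proj (𝕜 := ℝ) 1 (fun _ : Fin 2 => ℝ) 1).smulRight q

section

variable {Y : Type*} [NormedAddCommGroup Y] [NormedSpace ℝ Y]

lemma colOp_apply (p q : Y) (x : L12) : colOp p q x = x 0 • p + x 1 • q := by
  simp [colOp]

lemma colOp_norm_le {p q : Y} {c : ℝ} (hp : ‖p‖ ≤ c) (hq : ‖q‖ ≤ c) : ‖colOp p q‖ ≤ c := by
  refine ContinuousLinearMap.opNorm_le_bound _ ((norm_nonneg p).trans hp) fun x => ?_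
  rw [colOp_apply, L12_norm]
  calc ‖x 0 • p + x 1 • q‖ ≤ ‖x 0 • p‖ + ‖x 1 • q‖ := norm_add_le _ _
    _ = |x 0| * ‖p‖ + |x 1| * ‖q‖ := by simp [norm_smul]
    _ ≤ |x 0| * c + |x 1| * c := by gcongr
    _ = c * (|x 0| + |x 1|) := by ring

lemma exists_colOp (T : L12 →L[ℝ] Y) :
    ∃ u v : Y, T = colOp u v ∧ ‖u‖ ≤ ‖T‖ ∧ ‖v‖ ≤ ‖T‖ := by
  refine ⟨T (WithLp.toLp 1 ![1, 0]), T (WithLp.toLp 1 ![0, 1]), ?_, ?_, ?_⟩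
  · ext x
    rw [colOp_apply, ← map_smul, ← map_smul, ← map_add]
    congr 1
    ext i
    fin_cases i <;> simp
  · refine (T.le_opNorm _).trans_eq ?_
    simp [L12_norm]
  · refine (T.le_opNorm _).trans_eq ?_
    simp [L12_norm]

lemma approximable_of_cols {x z : L12} {u v p q : Y} {δ : ℝ} (hp : ‖p‖ ≤ 1) (hq : ‖q‖ ≤ 1)
    (hz : ‖z‖ = 1) (hpq : 1 ≤ ‖z 0 • p + z 1 • q‖) (hxz : ‖x - z‖ < δ)
    (hup : ‖u - p‖ < δ) (hvq : ‖v - q‖ < δ) : Approximable x (colOp u v) δ := by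
  have h1 := colOp_norm_le hp hq
  have h2 := (colOp p q).le_opNorm z
  rw [← colOp_apply] at hpq
  rw [hz, mul_one] at h2
  refine ⟨z, colOp p q, hz, le_antisymm h1 (hpq.trans h2), le_antisymm (h2.trans h1) hpq, hxz, ?_⟩
  have h3 : colOp u v - colOp p q = colOp (u - p) (v - q) := by
    ext y
    simp only [sub_apply, colOp_apply, smul_sub]
    abel
  rw [h3]
  exact (colOp_norm_le (le_max_left _ _) (le_max_right _ _)).trans_lt (max_lt hup hvq)

/-! ### Moving a column to the sphere, or into a face of the ball -/

lemma exists_norm_one_near [Nontrivial Y] (u : Y) (hu : ‖u‖ ≤ 1) :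
    ∃ p : Y, ‖p‖ = 1 ∧ ‖u - p‖ ≤ 1 - ‖u‖ := by
  rcases eq_or_ne u 0 with rfl | h0
  · obtain ⟨p, hp⟩ := exists_norm_eq Y (zero_le_one (α := ℝ))
    exact ⟨p, hp, by simp [hp]⟩
  · have hn : 0 < ‖u‖ := norm_pos_iff.2 h0
    refine ⟨‖u‖⁻¹ • u, by simp [norm_smul, hn.ne'], ?_⟩
    have h1 : u - ‖u‖⁻¹ • u = (1 - ‖u‖⁻¹) • u := by simp [sub_smul]
    have h2 : 1 ≤ ‖u‖⁻¹ := (one_le_inv₀ hn).2 hu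
    rw [h1, norm_smul, Real.norm_eq_abs, abs_of_nonpos (by linarith)]
    apply le_of_eq
    field_simp
    ring

lemma exists_sign (a : ℝ) : ∃ σ : ℝ, |σ| = 1 ∧ σ * σ = 1 ∧ a = σ * |a| := by
  rcases le_total 0 a with h | h
  · exact ⟨1, by simp, by simp, by simp [abs_of_nonneg h]⟩
  · exact ⟨-1, by simp, by simp, by simp [abs_of_nonpos h]⟩

lemma abs_sub_sign {a σ : ℝ} (hσ : |σ| = 1) (ha : a = σ * |a|) (h1 : |a| ≤ 1) :
    |a - σ| = 1 - |a| := by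
  have h : a - σ = σ * (|a| - 1) := by linear_combination ha
  rw [h, abs_mul, hσ, abs_of_nonpos (by linarith)]
  ring

lemma approximable_vertex_zero [Nontrivial Y] {x : L12} {u v : Y} {δ : ℝ} (hu : ‖u‖ ≤ 1)
    (hv : ‖v‖ ≤ 1) (hx : ‖x‖ ≤ 1) (h1 : 1 - |x 0| + |x 1| < δ) (h2 : 1 - ‖u‖ < δ) :
    Approximable x (colOp u v) δ := by
  obtain ⟨p, hp, hup⟩ := exists_norm_one_near u hu
  obtain ⟨σ, hσ, -, hx0⟩ := exists_sign (x 0)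
  rw [L12_norm] at hx
  have hb := abs_nonneg (x 1)
  refine approximable_of_cols (z := WithLp.toLp 1 ![σ, 0]) hp.le hv ?_ ?_ ?_
    (hup.trans_lt h2) (q := v) ?_
  · simp [L12_norm, hσ]
  · simp [norm_smul, hσ, hp]
  · simpa [L12_norm, abs_sub_sign hσ hx0 (by linarith)] using h1
  · simpa using (sub_nonneg.2 hu).trans_lt h2

lemma approximable_vertex_one [Nontrivial Y] {x : L12} {u v : Y} {δ : ℝ} (hu : ‖u‖ ≤ 1)
    (hv : ‖v‖ ≤ 1) (hx : ‖x‖ ≤ 1) (h1 : 1 - |x 1| + |x 0| < δ) (h2 : 1 - ‖v‖ < δ) :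
    Approximable x (colOp u v) δ := by
  obtain ⟨q, hq, hvq⟩ := exists_norm_one_near v hv
  obtain ⟨σ, hσ, -, hx1⟩ := exists_sign (x 1)
  rw [L12_norm] at hx
  have hb := abs_nonneg (x 0)
  refine approximable_of_cols (z := WithLp.toLp 1 ![0, σ]) hu hq.le ?_ ?_ ?_
    (p := u) ?_ (hvq.trans_lt h2)
  · simp [L12_norm, hσ]
  · simp [norm_smul, hσ, hq]
  · simpa [L12_norm, abs_sub_sign hσ hx1 (by linarith), add_comm] using h1
  · simpa using (sub_nonneg.2 hv).trans_lt h2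

lemma approximable_of_one_lt [Nontrivial Y] {x : L12} {T : L12 →L[ℝ] Y} {δ : ℝ} (hδ : 1 < δ)
    (hx : ‖x‖ ≤ 1) (hT : ‖T‖ ≤ 1) : Approximable x T δ := by
  obtain ⟨u, v, rfl, hu, hv⟩ := exists_colOp T
  have hu0 := norm_nonneg u
  have hv0 := norm_nonneg v
  rcases le_total |x 1| |x 0| with h | h
  · exact approximable_vertex_zero (hu.trans hT) (hv.trans hT) hx (by linarith) (by linarith)
  · exact approximable_vertex_one (hu.trans hT) (hv.trans hT) hx (by linarith) (by linarith)

/-- Under property β every vector of the unit ball can be pushed into the face of the ball on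
which the given `y*_α` equals one, by adding a multiple of `y_α - ρ u`. -/
lemma exists_face_near {ρ : ℝ} (hρ : ρ ∈ Set.Ico (0 : ℝ) 1) {Λ : Type*} {yv : Λ → Y}
    {yf : Λ → (Y →L[ℝ] ℝ)} (hf : ∀ α, ‖yf α‖ = 1)
    (h1 : ∀ α, yf α (yv α) = 1) (h2 : ∀ α γ, α ≠ γ → |yf α (yv γ)| ≤ ρ)
    (h3 : ∀ v : Y, IsLUB (Set.range fun α => |yf α v|) ‖v‖) (α : Λ) (u : Y) (hu : ‖u‖ ≤ 1) :
    ∃ p : Y, ‖p‖ ≤ 1 ∧ yf α p = 1 ∧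
      ‖u - p‖ ≤ (1 - yf α u) * (1 + ρ) / (1 - ρ * yf α u) := by
  obtain ⟨hρ0, hρ1⟩ := hρ
  have hfu : ∀ γ, |yf γ u| ≤ 1 := fun γ => by
    have := (yf γ).le_opNorm u
    rw [hf, one_mul, Real.norm_eq_abs] at this
    exact this.trans hu
  set s := yf α u with hs
  obtain ⟨hsl, hsr⟩ := abs_le.1 (hfu α)
  rw [← hs] at hsl hsr
  have hd : 0 < 1 - ρ * s := by nlinarith
  set μ := (1 - s) / (1 - ρ * s) with hμ
  have hμ0 : 0 ≤ μ := div_nonneg (by linarith) hd.le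
  have hμe : μ * (1 - ρ * s) = 1 - s := div_mul_cancel₀ _ hd.ne'
  have hρμ : ρ * μ ≤ 1 := by
    rw [hμ, ← mul_div_assoc, div_le_one hd]
    nlinarith
  have key : ∀ γ, yf γ (u + μ • (yv α - ρ • u)) = (1 - ρ * μ) * yf γ u + μ * yf γ (yv α) := by
    intro γ
    simp only [map_add, map_smul, map_sub, smul_eq_mul]
    ring
  have hα : yf α (u + μ • (yv α - ρ • u)) = 1 := by
    rw [key, h1, ← hs]
    linear_combination hμe
  refine ⟨u + μ • (yv α - ρ • u), ?_, hα, ?_⟩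
  · refine (h3 _).2 ?_
    rintro _ ⟨γ, rfl⟩
    dsimp only
    rcases eq_or_ne γ α with rfl | hne
    · simp [hα]
    · rw [key]
      calc |(1 - ρ * μ) * yf γ u + μ * yf γ (yv α)|
          ≤ |(1 - ρ * μ) * yf γ u| + |μ * yf γ (yv α)| := abs_add_le _ _
        _ = (1 - ρ * μ) * |yf γ u| + μ * |yf γ (yv α)| := by
          rw [abs_mul, abs_mul, abs_of_nonneg hμ0, abs_of_nonneg (sub_nonneg.2 hρμ)]
        _ ≤ (1 - ρ * μ) * 1 + μ * ρ := by
          exact add_le_add (mul_le_mul_of_nonneg_left (hfu γ) (sub_nonneg.2 hρμ))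
            (mul_le_mul_of_nonneg_left (h2 γ α hne) hμ0)
        _ = 1 := by ring
  · have e : (1 - s) * (1 + ρ) / (1 - ρ * s) = μ * (1 + ρ) := by rw [hμ]; ring
    rw [sub_add_cancel_left, norm_neg, norm_smul, Real.norm_eq_abs, abs_of_nonneg hμ0, e]
    gcongr
    refine (h3 _).2 ?_
    rintro _ ⟨γ, rfl⟩
    simp only [map_sub, map_smul, smul_eq_mul]
    have hγ := abs_le.1 (hfu γ)
    have hy : |yf γ (yv α)| ≤ 1 := by
      rcases eq_or_ne γ α with rfl | hne
      · simp [h1]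
      · exact (h2 γ α hne).trans hρ1.le
    have hy' := abs_le.1 hy
    rw [abs_le]
    constructor <;> nlinarith

end

/-! ### Scalar estimates -/

/-- The quadratic equation of which the bound in the theorem is the positive root. -/
lemma bound_quadratic {ρ ε : ℝ} (hρ : ρ ∈ Set.Ico (0 : ℝ) 1) (hε : ε ∈ Set.Ioo (0 : ℝ) 1) :
    ∃ D : ℝ, D = Real.sqrt (2 * ε) * (1 + ρ) /
        (Real.sqrt (1 - ρ ^ 2 + (ε / 2) * ρ ^ 2) + ρ * Real.sqrt (ε / 2)) ∧ 0 < D ∧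
      D ^ 2 * (1 - ρ) + 2 * ε * ρ * D = 2 * ε * (1 + ρ) := by
  obtain ⟨hρ0, hρ1⟩ := hρ
  obtain ⟨hε0, hε1⟩ := hε
  have hh : 0 < Real.sqrt (ε / 2) := Real.sqrt_pos.2 (by linarith)
  have hh2 : Real.sqrt (ε / 2) ^ 2 = ε / 2 := Real.sq_sqrt (by linarith)
  have h2 : Real.sqrt (2 * ε) = 2 * Real.sqrt (ε / 2) := by
    have : 2 * ε = (2 * Real.sqrt (ε / 2)) ^ 2 := by linear_combination (-4) * hh2
    rw [this, Real.sqrt_sq (by linarith)]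
  have hpos : 0 < 1 - ρ ^ 2 + (ε / 2) * ρ ^ 2 := by
    have : 0 ≤ (ε / 2) * ρ ^ 2 := by positivity
    nlinarith
  have hR : 0 < Real.sqrt (1 - ρ ^ 2 + (ε / 2) * ρ ^ 2) := Real.sqrt_pos.2 hpos
  have hR2 := Real.sq_sqrt hpos.le
  rw [h2]
  set h := Real.sqrt (ε / 2)
  set R := Real.sqrt (1 - ρ ^ 2 + (ε / 2) * ρ ^ 2)
  have hden : 0 < R + ρ * h := by positivity
  refine ⟨_, rfl, by positivity, ?_⟩
  set D := 2 * h * (1 + ρ) / (R + ρ * h) with hD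
  have hDe : D * R = 2 * h * (1 + ρ) - ρ * h * D := by
    have : D * (R + ρ * h) = 2 * h * (1 + ρ) := by rw [hD]; field_simp
    linear_combination this
  have hsq : (D * R) ^ 2 = (2 * h * (1 + ρ) - ρ * h * D) ^ 2 := by rw [hDe]
  have hne : (1 + ρ) ≠ 0 := by linarith
  apply mul_left_cancel₀ hne
  linear_combination hsq - D ^ 2 * hR2 + (4 * (1 + ρ) ^ 2 - 4 * ρ * (1 + ρ) * D + ρ ^ 2 * D ^ 2) * hh2

/-- With `2 ε = D τ`, one of the three corrections costs less than `D`. -/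
lemma scalar_cases {a b s t D τ ε : ℝ} (ha : 0 ≤ a) (hb : 0 ≤ b) (hab : a + b ≤ 1)
    (hs : s ≤ 1) (ht : t ≤ 1) (hτ : 0 < τ) (hτD : τ ≤ D) (hD : D ≤ 1)
    (hε : 2 * ε = D * τ) (h : 1 - ε < a * s + b * t) :
    (1 - a + b < D ∧ 1 - s < D) ∨ (1 - b + a < D ∧ 1 - t < D) ∨
      (1 - s < τ ∧ 1 - t < τ ∧ 1 - (a + b) < D) := by
  -- By symmetry, it suffices that the first alternative holds when `τ ≤ 1 - t`.
  have main : ∀ a b s t : ℝ, 0 ≤ a → 0 ≤ b → a + b ≤ 1 → s ≤ 1 → t ≤ 1 →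
      1 - ε < a * s + b * t → τ ≤ 1 - t → 1 - a + b < D ∧ 1 - s < D := by
    intro a b s t ha hb hab hs ht h hτt
    have hbt : b * t ≤ b * (1 - τ) := by gcongr; linarith
    constructor
    · by_contra! hc
      have has : a * s ≤ a := by nlinarith
      -- Weights `1 - τ / 2` and `τ / 2` on `a ≤ 1 - b` and `a ≤ 1 + b - D`.
      nlinarith [mul_nonneg hτ.le (sub_nonneg.2 hc),
        mul_nonneg (show 0 ≤ 2 - τ by linarith) (sub_nonneg.2 hab)]
    · by_contra! hc
      have has : a * s ≤ a * (1 - τ) := by gcongr; linarith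
      have : (a + b) * (1 - τ) ≤ 1 * (1 - τ) := by gcongr; linarith
      nlinarith
  rcases le_or_gt τ (1 - t) with h1 | h1
  · exact Or.inl (main a b s t ha hb hab hs ht h h1)
  rcases le_or_gt τ (1 - s) with h2 | h2
  · exact Or.inr (Or.inl (main b a t s hb ha (by linarith) ht hs (by linarith) h2))
  · refine Or.inr (Or.inr ⟨h2, h1, ?_⟩)
    have has : a * s ≤ a := by nlinarith
    have hbt : b * t ≤ b := by nlinarith
    nlinarith

/-! ### The upper bound -/

/-- Any positive `D ≤ 1` solving the quadratic equation is admissible in the definition of `Phi`. -/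
lemma approximable_bound {Y : Type*} [NormedAddCommGroup Y] [NormedSpace ℝ Y] [Nontrivial Y]
    {ρ ε D : ℝ} (hρ : ρ ∈ Set.Ico (0 : ℝ) 1) (hβ : PropertyBeta Y ρ)
    (hε : ε ∈ Set.Ioo (0 : ℝ) 1) (hD0 : 0 < D) (hD1 : D ≤ 1)
    (hq : D ^ 2 * (1 - ρ) + 2 * ε * ρ * D = 2 * ε * (1 + ρ))
    (x : L12) (T : L12 →L[ℝ] Y) (hx : ‖x‖ ≤ 1) (hT : ‖T‖ ≤ 1) (hTx : 1 - ε < ‖T x‖) :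
    Approximable x T D := by
  obtain ⟨Λ, yv, yf, -, hf, h1, h2, h3⟩ := hβ
  obtain ⟨u, v, rfl, hu, hv⟩ := exists_colOp T
  replace hu := hu.trans hT
  replace hv := hv.trans hT
  obtain ⟨_, ⟨α, rfl⟩, hα⟩ := (lt_isLUB_iff (h3 _)).1 hTx
  have face := exists_face_near hρ hf h1 h2 h3 α
  have hφ : ∀ w : Y, |yf α w| ≤ ‖w‖ := fun w => by
    simpa [hf] using (yf α).le_opNorm w
  obtain ⟨hρ0, hρ1⟩ := hρ
  obtain ⟨hε0, hε1⟩ := hε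
  obtain ⟨κ, hκ, hκκ, hκe⟩ := exists_sign (yf α (colOp u v x))
  obtain ⟨σ, hσ, hσσ, hσe⟩ := exists_sign (x 0)
  obtain ⟨θ, hθ, hθθ, hθe⟩ := exists_sign (x 1)
  set a := |x 0|
  set b := |x 1|
  -- `s` and `t` are the values of `κ • yf α` at the sign-corrected columns `σ • u`, `θ • v`.
  set s := κ * σ * yf α u with hs
  set t := κ * θ * yf α v with ht
  have ha : 0 ≤ a := abs_nonneg _
  have hb : 0 ≤ b := abs_nonneg _
  have hxn : ‖x‖ = a + b := L12_norm x
  have hab : a + b ≤ 1 := hxn ▸ hx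
  have hsu : s ≤ ‖u‖ := by
    refine (le_abs_self _).trans ?_
    rw [hs, abs_mul, abs_mul, hκ, hσ, one_mul, one_mul]
    exact hφ u
  have htv : t ≤ ‖v‖ := by
    refine (le_abs_self _).trans ?_
    rw [ht, abs_mul, abs_mul, hκ, hθ, one_mul, one_mul]
    exact hφ v
  have hst : 1 - ε < a * s + b * t := by
    refine lt_of_lt_of_eq hα ?_
    dsimp only
    have e1 : |yf α (colOp u v x)| = κ * yf α (colOp u v x) := by
      linear_combination (-κ) * hκe - |yf α (colOp u v x)| * hκκ
    rw [e1, colOp_apply, map_add, map_smul, map_smul, smul_eq_mul, smul_eq_mul, hs, ht]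
    linear_combination κ * yf α u * hσe + κ * yf α v * hθe
  have hden : 0 < 1 + ρ - ρ * D := by
    linarith [mul_le_of_le_one_right hρ0 hD1]
  set τ := D * (1 - ρ) / (1 + ρ - ρ * D) with hτ
  have hτe : τ * (1 + ρ - ρ * D) = D * (1 - ρ) := div_mul_cancel₀ _ hden.ne'
  have hτ0 : 0 < τ := div_pos (mul_pos hD0 (by linarith)) hden
  have hτD : τ ≤ D := by
    rw [hτ, div_le_iff₀ hden]
    linarith [mul_nonneg hD0.le (mul_nonneg hρ0 (show 0 ≤ 2 - D by linarith))]
  have hετ : 2 * ε = D * τ := by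
    apply mul_right_cancel₀ hden.ne'
    linear_combination -hq - D * hτe
  -- A column on which the functional exceeds `1 - τ` is moved into the face at cost less
  -- than `D`.
  have move : ∀ (η : ℝ) (w : Y), η * η = 1 → |η| = 1 → ‖w‖ ≤ 1 → 1 - κ * η * yf α w < τ →
      ∃ p : Y, ‖p‖ ≤ 1 ∧ κ * η * yf α p = 1 ∧ ‖w - p‖ < D := by
    intro η w hηη hη hw hlt
    have hkη : |κ * η| = 1 := by rw [abs_mul, hκ, hη, one_mul]
    have hkη2 : (κ * η) * (κ * η) = 1 := by linear_combination η * η * hκκ + hηη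
    obtain ⟨p, hp1, hp2, hp3⟩ := face ((κ * η) • w) (by
      rw [norm_smul, Real.norm_eq_abs, hkη, one_mul]; exact hw)
    refine ⟨(κ * η) • p, ?_, ?_, ?_⟩
    · rw [norm_smul, Real.norm_eq_abs, hkη, one_mul]; exact hp1
    · rw [map_smul, smul_eq_mul, hp2]
      linear_combination hkη2
    · have e : w - (κ * η) • p = (κ * η) • ((κ * η) • w - p) := by
        rw [smul_sub, smul_smul, hkη2, one_smul]
      rw [e, norm_smul, Real.norm_eq_abs, hkη, one_mul]
      refine hp3.trans_lt ?_
      rw [map_smul, smul_eq_mul]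
      set r := κ * η * yf α w
      have hr : r ≤ 1 := by
        refine (le_abs_self _).trans ?_
        rw [abs_mul, hkη, one_mul]
        exact (hφ w).trans hw
      have hρr : 0 < 1 - ρ * r := by
        linarith [mul_le_mul_of_nonneg_left hr hρ0]
      rw [div_lt_iff₀ hρr]
      linarith [mul_lt_mul_of_pos_right hlt hden]
  rcases scalar_cases ha hb hab (hsu.trans hu) (htv.trans hv) hτ0 hτD hD1 hετ hst with
    ⟨c1, c2⟩ | ⟨c1, c2⟩ | ⟨c1, c2, c3⟩
  · exact approximable_vertex_zero hu hv hx c1 (by linarith)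
  · exact approximable_vertex_one hu hv hx c1 (by linarith)
  · obtain ⟨p, hp, hp1, hup⟩ := move σ u hσσ hσ hu c1
    obtain ⟨q, hq, hq1, hvq⟩ := move θ v hθθ hθ hv c2
    have hr : 0 < a + b := by
      have has : a * s ≤ a := mul_le_of_le_one_right ha (hsu.trans hu)
      have hbt : b * t ≤ b := mul_le_of_le_one_right hb (htv.trans hv)
      linarith
    have hr1 : 1 ≤ (a + b)⁻¹ := (one_le_inv₀ hr).2 hab
    refine approximable_of_cols (z := (a + b)⁻¹ • x) hp hq ?_ ?_ ?_ hup hvq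
    · rw [norm_smul, hxn, Real.norm_eq_abs, abs_of_nonneg (by positivity),
        inv_mul_cancel₀ hr.ne']
    · refine le_trans ?_ (hφ _)
      have e : yf α (((a + b)⁻¹ • x) 0 • p + ((a + b)⁻¹ • x) 1 • q) = κ := by
        simp only [PiLp.smul_apply, map_add, map_smul, smul_eq_mul]
        have e1 : x 0 * yf α p = κ * a := by
          linear_combination yf α p * hσe + κ * a * hp1 - σ * a * yf α p * hκκ
        have e2 : x 1 * yf α q = κ * b := by
          linear_combination yf α q * hθe + κ * b * hq1 - θ * b * yf α q * hκκ
        have e3 : (a + b)⁻¹ * (a + b) = 1 := inv_mul_cancel₀ hr.ne'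
        linear_combination (a + b)⁻¹ * e1 + (a + b)⁻¹ * e2 + κ * e3
      rw [e, hκ]
    · have e : x - (a + b)⁻¹ • x = (1 - (a + b)⁻¹) • x := by rw [sub_smul, one_smul]
      rw [e, norm_smul, hxn, Real.norm_eq_abs, abs_of_nonpos (by linarith)]
      refine lt_of_eq_of_lt ?_ c3
      field_simp
      ring

theorem phi_l1_le_of_propertyBeta
    (Y : Type*) [NormedAddCommGroup Y] [NormedSpace ℝ Y] [CompleteSpace Y] [Nontrivial Y]
    (ρ : ℝ) (hρ : ρ ∈ Set.Ico (0 : ℝ) 1) (hβ : PropertyBeta Y ρ)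
    (ε : ℝ) (hε : ε ∈ Set.Ioo (0 : ℝ) 1) :
    PhiS L12 Y ε ≤ Phi L12 Y ε ∧
      Phi L12 Y ε ≤ min (Real.sqrt (2 * ε) * (1 + ρ) /
        (Real.sqrt (1 - ρ ^ 2 + (ε / 2) * ρ ^ 2) + ρ * Real.sqrt (ε / 2))) 1 := by
  obtain ⟨D, hD, hD0, hq⟩ := bound_quadratic hρ hε
  rw [← hD]
  have bdd : ∀ P : ℝ → Prop, BddBelow {δ : ℝ | 0 < δ ∧ P δ} := fun P => ⟨0, fun δ h => h.1.le⟩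
  have big : ∀ δ : ℝ, 1 < δ → Phi L12 Y ε ≤ δ := fun δ hδ =>
    csInf_le (bdd _) ⟨by linarith, fun x T hx hT _ => approximable_of_one_lt hδ hx hT⟩
  have hone : Phi L12 Y ε ≤ 1 := le_of_forall_gt_imp_ge_of_dense big
  refine ⟨?_, le_min ?_ hone⟩
  · refine csInf_le_csInf (bdd _) ⟨2, two_pos, fun x T hx hT _ =>
      approximable_of_one_lt one_lt_two hx hT⟩ ?_
    rintro δ ⟨h0, h⟩
    exact ⟨h0, fun x T hx hT => h x T hx.le hT.le⟩
  · rcases le_total D 1 with h | h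
    · exact csInf_le (bdd _) ⟨hD0, fun x T => approximable_bound hρ hβ hε hD0 h hq x T⟩
    · exact hone.trans h
end
end

section
/- Let Y be a real Banach space with property β with parameter ρ ∈ [0,1), witnessed by families {y_α : α ∈ Λ} ⊆ S_Y and {y*_α : α ∈ Λ} ⊆ S_{Y*}. Let y ∈ Y with ‖y‖ ≤ 1, let r ∈ (0,1), and let α₀ ∈ Λ be such that y*_{α₀}(y) ≥ 1 − r. Then there exists z ∈ Y with ‖z‖ = 1 such that: (i) y*_{α₀}(z) = 1; (ii) |y*_α(z)| ≤ 1 for all α ∈ Λ; and (iii) ‖y − z‖ ≤ r(1+ρ)/(1 − ρ + ρr). -/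
/-!
Write `q = 1 - y*_{α₀}(y) ∈ [0, r]`. The point `z = (1 - sρ) y + s y_{α₀}` with
`s = q / (1 - ρ + ρ q)` works: `s` solves `(1 - sρ)(1 - q) + s = 1`, so `y*_{α₀}(z) = 1`, while for
`α ≠ α₀` the bound `|y*_α(y_{α₀})| ≤ ρ` gives `|y*_α(z)| ≤ (1 - sρ) + sρ = 1`. Hence `‖z‖ = 1` by the
norming property, and `‖y - z‖ ≤ sρ + s = q(1+ρ) / (1 - ρ + ρ q)`, which is nondecreasing in `q`.
-/


theorem propertyBeta_face_approximation
    (Y : Type*) [NormedAddCommGroup Y] [NormedSpace ℝ Y] [CompleteSpace Y]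
    (ρ : ℝ) (hρ : ρ ∈ Set.Ico (0 : ℝ) 1)
    (Λ : Type*) (yv : Λ → Y) (yf : Λ → (Y →L[ℝ] ℝ))
    (h1 : ∀ α, ‖yv α‖ = 1) (h2 : ∀ α, ‖yf α‖ = 1) (h3 : ∀ α, yf α (yv α) = 1)
    (h4 : ∀ α γ, α ≠ γ → |yf α (yv γ)| ≤ ρ)
    (h5 : ∀ v : Y, IsLUB (Set.range fun α => |yf α v|) ‖v‖)
    (y : Y) (hy : ‖y‖ ≤ 1) (r : ℝ) (hr : r ∈ Set.Ioo (0 : ℝ) 1)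
    (α₀ : Λ) (hα₀ : 1 - r ≤ yf α₀ y) :
    ∃ z : Y, ‖z‖ = 1 ∧ yf α₀ z = 1 ∧ (∀ α, |yf α z| ≤ 1) ∧
      ‖y - z‖ ≤ r * (1 + ρ) / (1 - ρ + ρ * r) := by
  obtain ⟨hρ0, hρ1⟩ := hρ
  obtain ⟨hr0, hr1⟩ := hr
  have hle : ∀ α v, |yf α v| ≤ ‖v‖ := fun α v => (h5 v).1 ⟨α, rfl⟩
  obtain ⟨q, hq⟩ : ∃ q, q = 1 - yf α₀ y := ⟨_, rfl⟩
  have hq0 : 0 ≤ q := by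
    have := (le_abs_self _).trans ((hle α₀ y).trans hy)
    linarith
  have hqr : q ≤ r := by linarith
  have hD : 0 < 1 - ρ + ρ * q := by nlinarith [mul_nonneg hρ0 hq0]
  have hDr : 0 < 1 - ρ + ρ * r := by nlinarith [mul_nonneg hρ0 hr0.le]
  obtain ⟨s, hs⟩ : ∃ s, s = q / (1 - ρ + ρ * q) := ⟨_, rfl⟩
  have hs0 : 0 ≤ s := hs ▸ div_nonneg hq0 hD.le
  have hs1 : s ≤ 1 := by
    rw [hs, div_le_one hD]
    nlinarith
  have hsq : s * (1 - ρ + ρ * q) = q := by rw [hs]; field_simp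
  have ht : 0 ≤ 1 - s * ρ := by nlinarith
  have hz : ∀ α, yf α ((1 - s * ρ) • y + s • yv α₀)
      = (1 - s * ρ) * yf α y + s * yf α (yv α₀) := fun α => by simp
  have hz0 : yf α₀ ((1 - s * ρ) • y + s • yv α₀) = 1 := by
    rw [hz, h3, show yf α₀ y = 1 - q by linarith]
    linarith
  have hz1 : ∀ α, |yf α ((1 - s * ρ) • y + s • yv α₀)| ≤ 1 := by
    intro α
    by_cases h : α = α₀
    · subst h
      rw [hz0, abs_one]
    · rw [hz]
      calc |(1 - s * ρ) * yf α y + s * yf α (yv α₀)|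
          ≤ |(1 - s * ρ) * yf α y| + |s * yf α (yv α₀)| := abs_add_le _ _
        _ = (1 - s * ρ) * |yf α y| + s * |yf α (yv α₀)| := by
            rw [abs_mul, abs_mul, abs_of_nonneg ht, abs_of_nonneg hs0]
        _ ≤ (1 - s * ρ) * 1 + s * ρ := by
            gcongr
            · exact (hle α y).trans hy
            · exact h4 α α₀ h
        _ = 1 := by ring
  refine ⟨(1 - s * ρ) • y + s • yv α₀, le_antisymm ?_ ?_, hz0, hz1, ?_⟩
  · refine (h5 _).2 ?_
    rintro _ ⟨α, rfl⟩
    exact hz1 α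
  · have := hle α₀ ((1 - s * ρ) • y + s • yv α₀)
    rwa [hz0, abs_one] at this
  · calc ‖y - ((1 - s * ρ) • y + s • yv α₀)‖
        = ‖(s * ρ) • y - s • yv α₀‖ := by congr 1; module
      _ ≤ ‖(s * ρ) • y‖ + ‖s • yv α₀‖ := norm_sub_le _ _
      _ = s * ρ * ‖y‖ + s := by
          rw [norm_smul, norm_smul, h1, Real.norm_of_nonneg hs0,
            Real.norm_of_nonneg (mul_nonneg hs0 hρ0), mul_one]
      _ ≤ s * ρ * 1 + s := by gcongr
      _ = q / (1 - ρ + ρ * q) * (1 + ρ) := by rw [hs]; ring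
      _ ≤ r / (1 - ρ + ρ * r) * (1 + ρ) := by
          have : q / (1 - ρ + ρ * q) ≤ r / (1 - ρ + ρ * r) := by
            rw [div_le_div_iff₀ hD hDr]
            nlinarith
          gcongr
      _ = r * (1 + ρ) / (1 - ρ + ρ * r) := by ring
end

section
/- Let n ≥ 1 and let Y be an n-dimensional real Banach space that has property β with parameter ρ for some ρ with 0 ≤ ρ < 1/n. Then Y is isometric to ℓ∞⁽ⁿ⁾, i.e. there exists a linear isometric bijection from Y onto ℝⁿ equipped with the supremum norm. -/
/-!
The `(n + 1) × (n + 1)` matrix `(y*_α (y_γ))` for `n + 1` distinct indices has diagonal `1` and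
off-diagonal row sums at most `n * ρ < 1`, so it is strictly diagonally dominant, hence invertible,
and the corresponding `y_γ` are linearly independent. In dimension `n` this is impossible, so the
index set has at most `n` elements (`isEmpty_embedding_of_small_param`). Since the functionals
`y*_α` norm `Y`, the map `y ↦ (y*_α y)_α` is an isometric embedding of `Y` into `ℓ∞(Λ)`; its
injectivity forces `Λ` to have exactly `n` elements, and then it is onto.
-/

noncomputable section

/-- Biorthogonality up to an error `ρ < 1 / n` bounds the number of indices by `n`. -/
theorem isEmpty_embedding_of_small_param
    {Y : Type*} [NormedAddCommGroup Y] [NormedSpace ℝ Y] [FiniteDimensional ℝ Y]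
    {n : ℕ} (hn : 1 ≤ n) (hdim : Module.finrank ℝ Y = n) {ρ : ℝ} (hρn : ρ < 1 / n)
    {Λ : Type*} (yv : Λ → Y) (yf : Λ → (Y →L[ℝ] ℝ)) (h1 : ∀ α, yf α (yv α) = 1)
    (h2 : ∀ α γ, α ≠ γ → |yf α (yv γ)| ≤ ρ) : IsEmpty (Fin (n + 1) ↪ Λ) := by
  refine ⟨fun e => ?_⟩
  let A : Matrix (Fin (n + 1)) (Fin (n + 1)) ℝ := Matrix.of fun i j => yf (e i) (yv (e j))
  have hdet : A.det ≠ 0 := by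
    apply det_ne_zero_of_sum_row_lt_diag
    intro k
    have hn0 : (0 : ℝ) < n := by exact_mod_cast hn
    calc ∑ j ∈ Finset.univ.erase k, ‖A k j‖ ≤ ∑ _j ∈ Finset.univ.erase k, ρ := by
          refine Finset.sum_le_sum fun j hj => ?_
          exact h2 _ _ (e.injective.ne (Finset.ne_of_mem_erase hj).symm)
      _ = n * ρ := by simp
      _ < 1 := by rw [mul_comm]; exact (lt_div_iff₀ hn0).1 hρn
      _ = ‖A k k‖ := by simp [A, h1]
  have hli : LinearIndependent ℝ fun j => yv (e j) := by
    rw [Fintype.linearIndependent_iff]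
    intro c hc
    have hAc : A.mulVec c = 0 := by
      ext i
      simpa [A, Matrix.mulVec, dotProduct, mul_comm] using congrArg (yf (e i)) hc
    exact congrFun (Matrix.eq_zero_of_mulVec_eq_zero hdet hAc)
  have := hli.fintype_card_le_finrank
  simp [hdim] at this

/-- An `n`-dimensional Banach space with property β with parameter `ρ < 1/n`
is isometric to `ℓ∞⁽ⁿ⁾`. -/
theorem isometric_linfty_of_propertyBeta_small_param
    (n : ℕ) (hn : 1 ≤ n)
    (Y : Type*) [NormedAddCommGroup Y] [NormedSpace ℝ Y] [CompleteSpace Y]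
    (hdim : Module.finrank ℝ Y = n)
    (ρ : ℝ) (hρ0 : 0 ≤ ρ) (hρn : ρ < 1 / n) (hβ : PropertyBeta Y ρ) :
    Nonempty (Y ≃ₗᵢ[ℝ] PiLp ⊤ (fun _ : Fin n => ℝ)) := by
  obtain ⟨Λ, yv, yf, -, -, h1, h2, hlub⟩ := hβ
  have : FiniteDimensional ℝ Y := FiniteDimensional.of_finrank_pos (by omega)
  have hemb := isEmpty_embedding_of_small_param hn hdim hρn yv yf h1 h2
  have hfin : Finite Λ := by
    by_contra h
    rw [not_finite_iff_infinite] at h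
    exact hemb.false (Fin.valEmbedding.trans (Infinite.natEmbedding Λ))
  have := Fintype.ofFinite Λ
  have hle : Fintype.card Λ ≤ n := by
    by_contra! h
    obtain ⟨e⟩ := Function.Embedding.nonempty_of_card_le
      (α := Fin (n + 1)) (β := Λ) (by simpa using h)
    exact hemb.false e
  let T : Y →ₗ[ℝ] (Λ → ℝ) := LinearMap.pi fun α => (yf α).toLinearMap
  have hT : Function.Injective T := by
    refine (injective_iff_map_eq_zero T).2 fun v hv => ?_
    have hz : ∀ α, yf α v = 0 := fun α => congrFun hv α
    refine norm_le_zero_iff.1 ((hlub v).2 ?_)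
    rintro _ ⟨α, rfl⟩
    simp [hz]
  have hge : n ≤ Fintype.card Λ := by
    simpa [hdim] using LinearMap.finrank_le_finrank_of_injective hT
  let e : Fin n ≃ Λ := (Fintype.equivFinOfCardEq (le_antisymm hle hge)).symm
  let S : Y →ₗᵢ[ℝ] PiLp ⊤ (fun _ : Fin n => ℝ) :=
    { toLinearMap := (WithLp.linearEquiv ⊤ ℝ (Fin n → ℝ)).symm.toLinearMap ∘ₗ
        LinearMap.pi fun i => (yf (e i)).toLinearMap
      norm_map' := fun v => by
        have : Nonempty (Fin n) := ⟨⟨0, hn⟩⟩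
        have : Nonempty Λ := ⟨e ⟨0, hn⟩⟩
        rw [PiLp.norm_eq_ciSup]
        exact (e.iSup_comp (g := fun α => |yf α v|)).trans (hlub v).ciSup_eq }
  exact ⟨S.toLinearIsometryEquiv (by
    rw [hdim, (WithLp.linearEquiv ⊤ ℝ (Fin n → ℝ)).finrank_eq]; simp)⟩
end
end

section
/- Let n ≥ 1 and let Y be an n-dimensional real Banach space with families {y_α : α ∈ Λ} ⊆ S_Y and {y*_α : α ∈ Λ} ⊆ S_{Y*} satisfying the property β conditions with parameter ρ for some 0 ≤ ρ < 1/n (that is: y*_α(y_α) = 1 for all α; |y*_α(y_γ)| ≤ ρ for α ≠ γ; and ‖y‖ = sup_α |y*_α(y)| for all y ∈ Y). Then the index set Λ has exactly n elements. -/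
/-!
For distinct indices, the matrix `(y*_i (y_j))` has unit diagonal and off-diagonal entries of modulus
at most `ρ`. A block of size `n + 1` is strictly diagonally dominant because `n * ρ < 1`, hence
invertible (Gershgorin), so its `n + 1` vectors would be linearly independent in an
`n`-dimensional space; therefore `Λ` has at most `n` elements. Conversely, the functionals are
norming, so `v ↦ (y*_α v)_α` embeds `Y` linearly into `ℝ^Λ`, and `Λ` has at least `n` elements.
-/

/-- The vectors of a biorthogonal-up-to-`ρ` system are linearly independent over any finite set
of `k + 1` indices with `k * ρ < 1`, by diagonal dominance of the evaluation matrix. -/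
theorem linearIndependent_of_small_offDiag {Y Λ : Type*} [AddCommGroup Y] [Module ℝ Y]
    (yv : Λ → Y) (yf : Λ → (Y →ₗ[ℝ] ℝ)) (ρ : ℝ) (h3 : ∀ α, yf α (yv α) = 1)
    (h4 : ∀ α γ, α ≠ γ → |yf α (yv γ)| ≤ ρ) (k : ℕ) (hk : k * ρ < 1)
    (s : Finset Λ) (hs : s.card = k + 1) :
    LinearIndependent ℝ (fun i : s => yv i) := by
  classical
  let A : Matrix s s ℝ := fun i j => yf i (yv j)
  have hA : A.det ≠ 0 := by
    apply det_ne_zero_of_sum_row_lt_diag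
    intro i
    have hle : ∑ j ∈ Finset.univ.erase i, ‖A i j‖ ≤ (Finset.univ.erase i).card • ρ := by
      apply Finset.sum_le_card_nsmul
      intro j hj
      exact h4 _ _ fun h => Finset.ne_of_mem_erase hj (Subtype.ext h.symm)
    have hc : (Finset.univ.erase i).card = k := by
      rw [Finset.card_erase_of_mem (Finset.mem_univ i), Finset.card_univ, Fintype.card_coe, hs]
      rfl
    have hd : ‖A i i‖ = 1 := by simp [A, h3]
    rw [hc, nsmul_eq_mul] at hle
    linarith
  rw [Fintype.linearIndependent_iff]
  intro c hc
  have hz : A.mulVec c = 0 := by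
    funext i
    have h := congrArg (yf i) hc
    simpa [A, Matrix.mulVec, dotProduct, mul_comm] using h
  exact congrFun (Matrix.eq_zero_of_mulVec_eq_zero hA hz)

/-- If an `n`-dimensional Banach space has witnessing families for property β with
parameter `ρ < 1/n`, then the index set has exactly `n` elements. -/
theorem card_index_of_propertyBeta_small_param
    (n : ℕ) (hn : 1 ≤ n)
    (Y : Type*) [NormedAddCommGroup Y] [NormedSpace ℝ Y] [CompleteSpace Y]
    (hdim : Module.finrank ℝ Y = n)
    (ρ : ℝ) (hρ0 : 0 ≤ ρ) (hρn : ρ < 1 / n)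
    (Λ : Type*) (yv : Λ → Y) (yf : Λ → (Y →L[ℝ] ℝ))
    (h1 : ∀ α, ‖yv α‖ = 1) (h2 : ∀ α, ‖yf α‖ = 1) (h3 : ∀ α, yf α (yv α) = 1)
    (h4 : ∀ α γ, α ≠ γ → |yf α (yv γ)| ≤ ρ)
    (h5 : ∀ v : Y, IsLUB (Set.range fun α => |yf α v|) ‖v‖) :
    Nat.card Λ = n := by
  have hfd : FiniteDimensional ℝ Y := Module.finite_of_finrank_pos (by omega)
  have hk : n * ρ < 1 := by
    rwa [lt_div_iff₀ (by exact_mod_cast hn), mul_comm] at hρn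
  have hno : ∀ s : Finset Λ, s.card ≠ n + 1 := by
    intro s hs
    have h := (linearIndependent_of_small_offDiag yv (fun α => (yf α : Y →ₗ[ℝ] ℝ)) ρ h3 h4 n hk
      s hs).fintype_card_le_finrank
    rw [Fintype.card_coe] at h
    omega
  have hfin : Finite Λ := by
    by_contra h
    rw [not_finite_iff_infinite] at h
    obtain ⟨s, hs⟩ := Infinite.exists_subset_card_eq Λ (n + 1)
    exact hno s hs
  cases nonempty_fintype Λ
  rw [Nat.card_eq_fintype_card]
  apply le_antisymm
  · by_contra! h
    obtain ⟨s, -, hs⟩ := Finset.exists_subset_card_eq (s := (Finset.univ : Finset Λ)) (n := n + 1)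
      (by rw [Finset.card_univ]; omega)
    exact hno s hs
  · let F : Y →ₗ[ℝ] (Λ → ℝ) := LinearMap.pi fun α => (yf α : Y →ₗ[ℝ] ℝ)
    have hF : Function.Injective F := by
      rw [injective_iff_map_eq_zero]
      intro v hv
      -- `0` bounds every `|y*_α v|`, so the norming property forces `‖v‖ ≤ 0`.
      refine norm_le_zero_iff.mp ((h5 v).2 ?_)
      rintro _ ⟨α, rfl⟩
      have h : yf α v = 0 := congrFun hv α
      simp [h]
    have h := LinearMap.finrank_le_finrank_of_injective hF
    rwa [hdim, Module.finrank_fintype_fun_eq_card] at h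
end
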